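/- Let 0 < α < 1 and T > 0, and let (u, p) be a strong solution of the Navier–Stokes equations on [0,T) × ℝ³ (smooth, divergence-free, with u(t,·) and p(t,·) Schwartz in x, locally uniformly in t), with vorticity ω = curl u. If the vorticity L² norm blows up at time T, i.e. limsup_{t→T⁻} ‖ω(t,·)‖_{L²} = ∞, then ∫₀ᵀ (‖ω(τ,·)‖_{Ḃ^{−α}_{∞,∞}}^{2/(2−α)} + ‖ω(τ,·)‖_{Ḃ^{−1−α}_{∞,∞}}^{2/(1−α)}) dτ = ∞. -/

import Mathlib

open MeasureTheory Real Complex Filter Function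
open scoped ENNReal FourierTransform SchwartzMap

noncomputable section

/-- The properties of the radial smooth cutoff `χ` used to build the
Littlewood–Paley decomposition: smooth, compactly supported, radial,
`0 ≤ χ ≤ 1`, `χ = 1` on `{‖ξ‖ ≤ 3/4}` and `χ = 0` on `{‖ξ‖ > 4/3}`. -/
def IsLPCutoff {n : ℕ} (χ : EuclideanSpace ℝ (Fin n) → ℝ) : Prop :=
  ContDiff ℝ ((⊤ : ℕ∞) : WithTop ℕ∞) χ ∧ HasCompactSupport χ ∧
    (∀ ξ η, ‖ξ‖ = ‖η‖ → χ ξ = χ η) ∧ (∀ ξ, 0 ≤ χ ξ) ∧ (∀ ξ, χ ξ ≤ 1) ∧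
    (∀ ξ, ‖ξ‖ ≤ 3 / 4 → χ ξ = 1) ∧ (∀ ξ, 4 / 3 < ‖ξ‖ → χ ξ = 0)

/-- The low-frequency Littlewood–Paley projection `S_j f = 𝓕⁻¹(χ(·/2^j) 𝓕 f)`. -/
def Sproj {n : ℕ} (χ : EuclideanSpace ℝ (Fin n) → ℝ) (j : ℤ)
    (f : EuclideanSpace ℝ (Fin n) → ℂ) : EuclideanSpace ℝ (Fin n) → ℂ :=
  𝓕⁻ fun ξ => ((χ ((2 : ℝ) ^ (-j) • ξ) : ℝ) : ℂ) * 𝓕 f ξ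

/-- The Littlewood–Paley block `Δ_j f = 𝓕⁻¹(φ̂(·/2^j) 𝓕 f)`, where
`φ̂(ξ) = χ(ξ/2) - χ(ξ)`, i.e. `φ̂(ξ/2^j) = χ(ξ/2^(j+1)) - χ(ξ/2^j)`. -/
def Dproj {n : ℕ} (χ : EuclideanSpace ℝ (Fin n) → ℝ) (j : ℤ)
    (f : EuclideanSpace ℝ (Fin n) → ℂ) : EuclideanSpace ℝ (Fin n) → ℂ :=
  𝓕⁻ fun ξ => ((χ ((2 : ℝ) ^ (-(j + 1)) • ξ) - χ ((2 : ℝ) ^ (-j) • ξ) : ℝ) : ℂ) * 𝓕 f ξ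

/-- The `ℓ^q(ℤ)` norm of a sequence of extended nonnegative reals, with the usual
supremum modification for `q = ∞`. -/
def lqNorm (q : ℝ≥0∞) (a : ℤ → ℝ≥0∞) : ℝ≥0∞ :=
  if q = ∞ then ⨆ j, a j else (∑' j, a j ^ q.toReal) ^ (1 / q.toReal)

/-- The homogeneous Besov norm `‖f‖_{Ḃ^s_{p,q}}`, valued in `[0,∞]`. -/
def besovNorm {n : ℕ} (χ : EuclideanSpace ℝ (Fin n) → ℝ) (s : ℝ) (p q : ℝ≥0∞)
    (f : EuclideanSpace ℝ (Fin n) → ℂ) : ℝ≥0∞ :=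
  lqNorm q fun j => (2 : ℝ≥0∞) ^ ((j : ℝ) * s) * eLpNorm (Dproj χ j f) p volume
noncomputable section

/-- Abbreviation for the Euclidean space `ℝ³`. -/
abbrev E3 := EuclideanSpace ℝ (Fin 3)

/-- The partial derivative `∂ᵢ f` in the `i`-th coordinate direction. -/
def pd (i : Fin 3) (f : E3 → ℝ) : E3 → ℝ :=
  fun x => fderiv ℝ f x (EuclideanSpace.single i 1)

/-- The curl `∇ × u = (∂₂u³ - ∂₃u², ∂₃u¹ - ∂₁u³, ∂₁u² - ∂₂u¹)` of a vector field on `ℝ³`. -/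
def curl3 (u : Fin 3 → E3 → ℝ) : Fin 3 → E3 → ℝ :=
  ![fun x => pd 1 (u 2) x - pd 2 (u 1) x,
    fun x => pd 2 (u 0) x - pd 0 (u 2) x,
    fun x => pd 0 (u 1) x - pd 1 (u 0) x]

/-- The curl of a Schwartz vector field on `ℝ³`. -/
def curlS (u : Fin 3 → 𝓢(E3, ℝ)) : Fin 3 → E3 → ℝ :=
  curl3 fun i => ⇑(u i)

/-- The `L²` norm of a vector field (the `ℓ²` combination of the componentwise norms),
valued in `[0,∞]`. -/
def vecL2 (v : Fin 3 → E3 → ℝ) : ℝ≥0∞ :=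
  (∑ i : Fin 3, eLpNorm (v i) 2 volume ^ (2 : ℝ)) ^ (1 / 2 : ℝ)

/-- The `L²` norm `‖∇v‖_{L²}` of the gradient of a vector field,
`‖∇v‖_{L²}² = Σ_{i,j} ‖∂ᵢ vʲ‖_{L²}²`, valued in `[0,∞]`. -/
def gradL2 (v : Fin 3 → E3 → ℝ) : ℝ≥0∞ :=
  (∑ i : Fin 3, ∑ j : Fin 3, eLpNorm (pd i (v j)) 2 volume ^ (2 : ℝ)) ^ (1 / 2 : ℝ)

/-- The homogeneous Besov norm `‖v‖_{Ḃ^s_{∞,∞}} = sup_j 2^{js} ‖Δ_j v‖_{L^∞}` of a real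
vector field on `ℝ³`, taken as the maximum (supremum) over the components. -/
def vecBesovInf (χ : E3 → ℝ) (s : ℝ) (v : Fin 3 → E3 → ℝ) : ℝ≥0∞ :=
  ⨆ i : Fin 3, ⨆ j : ℤ,
    (2 : ℝ≥0∞) ^ ((j : ℝ) * s) * eLpNorm (Dproj χ j fun x => ((v i x : ℝ) : ℂ)) ⊤ volume

/-- The homogeneous Besov norm `Ḃ^s_{2,2}` of a 3×3-matrix field, as the `ℓ²`
combination of the componentwise Besov norms. -/
def matBesov22 (χ : E3 → ℝ) (s : ℝ) (m : Fin 3 → Fin 3 → E3 → ℝ) : ℝ≥0∞ :=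
  (∑ i : Fin 3, ∑ j : Fin 3,
      besovNorm χ s 2 2 (fun x => ((m i j x : ℝ) : ℂ)) ^ (2 : ℝ)) ^ (1 / 2 : ℝ)

/-- The `L²` norm of `Λ^α v`, where `Λ^α f = 𝓕⁻¹(|ξ|^α 𝓕 f)` acts componentwise on the
real vector field `v`, taken as the `ℓ²` combination of the componentwise norms. -/
def vecFracLapL2 (α : ℝ) (v : Fin 3 → E3 → ℝ) : ℝ≥0∞ :=
  (∑ i : Fin 3,
      eLpNorm (𝓕⁻ fun ξ => ((‖ξ‖ ^ α : ℝ) : ℂ) * 𝓕 (fun x => ((v i x : ℝ) : ℂ)) ξ) 2 volume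
        ^ (2 : ℝ)) ^ (1 / 2 : ℝ)

/-- The vortex-stretching integral `∫ ((ω·∇)u)·ω dx` of a Schwartz vector field `u`
with vorticity `ω = curl u`. -/
def vortexStretch (u : Fin 3 → 𝓢(E3, ℝ)) : ℝ :=
  ∫ x, ∑ j : Fin 3, (∑ i : Fin 3, curlS u i x * pd i (⇑(u j)) x) * curlS u j x

/-- A **strong solution of the Navier–Stokes equations** on `[0,T) × ℝ³`: the velocity
`u` and the pressure `p` are smooth on `[0,T) × ℝ³` and Schwartz in the space variable
with all Schwartz seminorms locally bounded in time, `u(t,·)` is divergence-free, and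
`∂ₜu - Δu + (u·∇)u + ∇p = 0` on `(0,T) × ℝ³`. -/
structure IsStrongSolution (T : ℝ) (u : ℝ → Fin 3 → 𝓢(E3, ℝ)) (p : ℝ → 𝓢(E3, ℝ)) :
    Prop where
  smooth_u : ∀ i : Fin 3, ContDiffOn ℝ ((⊤ : ℕ∞) : WithTop ℕ∞)
    (fun tx : ℝ × E3 => u tx.1 i tx.2) (Set.Ico 0 T ×ˢ Set.univ)
  smooth_p : ContDiffOn ℝ ((⊤ : ℕ∞) : WithTop ℕ∞)
    (fun tx : ℝ × E3 => p tx.1 tx.2) (Set.Ico 0 T ×ˢ Set.univ)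
  locBdd_u : ∀ k l : ℕ, ∀ t ∈ Set.Ico (0 : ℝ) T, ∃ ε > 0, ∃ M : ℝ,
    ∀ s ∈ Set.Ico (0 : ℝ) T, |s - t| < ε → ∀ i, SchwartzMap.seminorm ℝ k l (u s i) ≤ M
  locBdd_p : ∀ k l : ℕ, ∀ t ∈ Set.Ico (0 : ℝ) T, ∃ ε > 0, ∃ M : ℝ,
    ∀ s ∈ Set.Ico (0 : ℝ) T, |s - t| < ε → SchwartzMap.seminorm ℝ k l (p s) ≤ M
  divFree : ∀ t ∈ Set.Ico (0 : ℝ) T, ∀ x, ∑ i : Fin 3, pd i (⇑(u t i)) x = 0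
  eqn : ∀ t ∈ Set.Ioo (0 : ℝ) T, ∀ x, ∀ j : Fin 3,
    deriv (fun s => u s j x) t - (∑ i : Fin 3, pd i (pd i (⇑(u t j))) x)
      + (∑ i : Fin 3, u t i x * pd i (⇑(u t j)) x) + pd j (⇑(p t)) x = 0

/-- The space-time integral `∫₀ᵀ (‖ω(τ)‖_{Ḃ^{-α}_{∞,∞}}^{2/(2-α)} +
‖ω(τ)‖_{Ḃ^{-1-α}_{∞,∞}}^{2/(1-α)}) dτ` of the vorticity `ω = curl u`. -/
def vortBesovIntegral (χ : E3 → ℝ) (α T : ℝ) (u : ℝ → Fin 3 → 𝓢(E3, ℝ)) : ℝ≥0∞ :=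
  ∫⁻ τ in Set.Ioo (0 : ℝ) T,
    vecBesovInf χ (-α) (curlS (u τ)) ^ (2 / (2 - α))
      + vecBesovInf χ (-1 - α) (curlS (u τ)) ^ (2 / (1 - α))

open scoped LineDeriv

/-- The low-frequency projection acting on Schwartz functions. -/
def lowPass (χ : E3 → ℝ) (j : ℤ) : 𝓢(E3, ℂ) →L[ℂ] 𝓢(E3, ℂ) :=
  SchwartzMap.fourierMultiplierCLM ℂ fun ξ => ((χ ((2 : ℝ) ^ (-j) • ξ) : ℝ) : ℂ)

/-- The squared `L²` norm of a Schwartz function. -/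
def l2sq (f : 𝓢(E3, ℂ)) : ℝ := ∫ x, ‖f x‖ ^ 2

theorem l2sq_nonneg (f : 𝓢(E3, ℂ)) : 0 ≤ l2sq f :=
  integral_nonneg fun _ => by positivity

theorem integrable_norm_sq (f : 𝓢(E3, ℂ)) : Integrable fun x => ‖f x‖ ^ 2 :=
  (memLp_two_iff_integrable_sq_norm (f.continuous.aestronglyMeasurable)).1 (f.memLp 2)

theorem l2sq_fourier (f : 𝓢(E3, ℂ)) : l2sq (𝓕 f) = l2sq f :=
  SchwartzMap.integral_norm_sq_fourier f

theorem IsLPCutoff.hasTemperateGrowth_dilate {χ : E3 → ℝ} (hχ : IsLPCutoff χ) (j : ℤ) :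
    (fun ξ : E3 => ((χ ((2 : ℝ) ^ (-j) • ξ) : ℝ) : ℂ)).HasTemperateGrowth := by
  have h : χ.HasTemperateGrowth := hχ.2.1.hasTemperateGrowth hχ.1
  fun_prop

theorem fourier_fourierMultiplierCLM_apply {g : E3 → ℂ} (hg : g.HasTemperateGrowth)
    (f : 𝓢(E3, ℂ)) (ξ : E3) :
    𝓕 (SchwartzMap.fourierMultiplierCLM ℂ g f) ξ = g ξ * 𝓕 f ξ := by
  rw [SchwartzMap.fourierMultiplierCLM_apply, FourierTransform.fourier_fourierInv_eq,
    SchwartzMap.smulLeftCLM_apply_apply hg, smul_eq_mul]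

theorem fourier_lowPass {χ : E3 → ℝ} (hχ : IsLPCutoff χ) (j : ℤ) (f : 𝓢(E3, ℂ)) (ξ : E3) :
    𝓕 (lowPass χ j f) ξ = ((χ ((2 : ℝ) ^ (-j) • ξ) : ℝ) : ℂ) * 𝓕 f ξ :=
  fourier_fourierMultiplierCLM_apply (hχ.hasTemperateGrowth_dilate j) f ξ

theorem lowPass_succ_sub_eq_Dproj {χ : E3 → ℝ} (hχ : IsLPCutoff χ) (j : ℤ) (f : 𝓢(E3, ℂ)) :
    ⇑(lowPass χ (j + 1) f - lowPass χ j f) = Dproj χ j f := by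
  rw [← FourierTransform.fourierInv_fourier_eq (F := 𝓢(E3, ℂ))
    (lowPass χ (j + 1) f - lowPass χ j f), SchwartzMap.fourierInv_coe, Dproj]
  congr 1
  ext ξ
  rw [sub_eq_add_neg, FourierTransform.fourier_add, FourierTransform.fourier_neg]
  simp only [_root_.add_apply, _root_.neg_apply]
  rw [fourier_lowPass hχ, fourier_lowPass hχ, SchwartzMap.fourier_coe]
  push_cast
  ring

theorem fourier_sub_lowPass {χ : E3 → ℝ} (hχ : IsLPCutoff χ) (j : ℤ) (f : 𝓢(E3, ℂ)) (ξ : E3) :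
    𝓕 (f - lowPass χ j f) ξ = ((1 - χ ((2 : ℝ) ^ (-j) • ξ) : ℝ) : ℂ) * 𝓕 f ξ := by
  rw [sub_eq_add_neg, FourierTransform.fourier_add, FourierTransform.fourier_neg]
  simp only [_root_.add_apply, _root_.neg_apply]
  rw [fourier_lowPass hχ]
  push_cast
  ring

theorem norm_fourier_sub_lowPass_le {χ : E3 → ℝ} (hχ : IsLPCutoff χ) (j : ℤ) (f : 𝓢(E3, ℂ))
    (ξ : E3) : ‖𝓕 (f - lowPass χ j f) ξ‖ ≤ ‖𝓕 f ξ‖ := by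
  rw [fourier_sub_lowPass hχ, norm_mul, Complex.norm_real, Real.norm_eq_abs]
  obtain ⟨-, -, -, h0, h1, -, -⟩ := hχ
  have := h0 ((2 : ℝ) ^ (-j) • ξ)
  have := h1 ((2 : ℝ) ^ (-j) • ξ)
  have : |1 - χ ((2 : ℝ) ^ (-j) • ξ)| ≤ 1 := by rw [abs_le]; constructor <;> linarith
  exact mul_le_of_le_one_left (norm_nonneg _) this

theorem l2sq_sub_lowPass_le {χ : E3 → ℝ} (hχ : IsLPCutoff χ) (j : ℤ) (f : 𝓢(E3, ℂ)) :
    l2sq (f - lowPass χ j f) ≤ l2sq f := by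
  rw [← l2sq_fourier, ← l2sq_fourier f]
  refine integral_mono (integrable_norm_sq _) (integrable_norm_sq _) fun ξ => ?_
  have := norm_fourier_sub_lowPass_le hχ j f ξ
  gcongr

/-- The `i`-th partial derivative of a Schwartz function. -/
def spd {F : Type*} [NormedAddCommGroup F] [NormedSpace ℝ F] (i : Fin 3) (f : 𝓢(E3, F)) :
    𝓢(E3, F) := ∂_{(EuclideanSpace.single i 1 : E3)} f

theorem fourier_spd (i : Fin 3) (f : 𝓢(E3, ℂ)) (ξ : E3) :
    𝓕 (spd i f) ξ = 2 * π * Complex.I * (ξ i : ℂ) * 𝓕 f ξ := by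
  have : (inner ℝ · (EuclideanSpace.single i 1 : E3)).HasTemperateGrowth := by fun_prop
  rw [spd, SchwartzMap.fourier_lineDerivOp_eq, _root_.smul_apply,
    SchwartzMap.smulLeftCLM_apply_apply this]
  simp [EuclideanSpace.inner_single_right, mul_assoc]

theorem sum_norm_sq_fourier_spd (f : 𝓢(E3, ℂ)) (ξ : E3) :
    ∑ i, ‖𝓕 (spd i f) ξ‖ ^ 2 = (2 * π) ^ 2 * ‖ξ‖ ^ 2 * ‖𝓕 f ξ‖ ^ 2 := by
  simp_rw [fourier_spd, norm_mul, mul_pow, ← Finset.sum_mul]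
  congr 1
  rw [EuclideanSpace.norm_sq_eq]
  simp [← Finset.mul_sum]

theorem integrable_norm_sq_mul_fourier (f : 𝓢(E3, ℂ)) :
    Integrable fun ξ : E3 => (2 * π) ^ 2 * ‖ξ‖ ^ 2 * ‖𝓕 f ξ‖ ^ 2 := by
  simp_rw [← sum_norm_sq_fourier_spd]
  exact integrable_finsetSum _ fun i _ => integrable_norm_sq _

theorem sum_l2sq_spd (f : 𝓢(E3, ℂ)) :
    ∑ i, l2sq (spd i f) = ∫ ξ, (2 * π) ^ 2 * ‖ξ‖ ^ 2 * ‖𝓕 f ξ‖ ^ 2 := by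
  simp_rw [← sum_norm_sq_fourier_spd]
  rw [integral_finsetSum _ fun i _ => integrable_norm_sq _]
  exact Finset.sum_congr rfl fun i _ => (l2sq_fourier _).symm

theorem l2sq_sub_lowPass_le_grad {χ : E3 → ℝ} (hχ : IsLPCutoff χ) (j : ℤ) (f : 𝓢(E3, ℂ)) :
    l2sq (f - lowPass χ j f) ≤ ((2 : ℝ) ^ (-j)) ^ 2 * ∑ i, l2sq (spd i f) := by
  rw [← l2sq_fourier, sum_l2sq_spd, ← integral_const_mul]
  refine integral_mono (integrable_norm_sq _)
    ((integrable_norm_sq_mul_fourier f).const_mul _) fun ξ => ?_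
  simp only
  rw [← mul_assoc]
  by_cases hξ : ‖(2 : ℝ) ^ (-j) • ξ‖ ≤ 3 / 4
  · rw [fourier_sub_lowPass hχ, hχ.2.2.2.2.2.1 _ hξ]
    simp only [sub_self, Complex.ofReal_zero, zero_mul, norm_zero, zero_pow two_ne_zero]
    positivity
  · push Not at hξ
    have h1 := norm_fourier_sub_lowPass_le hχ j f ξ
    have h2 : 1 ≤ ((2 : ℝ) ^ (-j)) ^ 2 * ((2 * π) ^ 2 * ‖ξ‖ ^ 2) := by
      rw [norm_smul, Real.norm_of_nonneg (by positivity)] at hξ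
      have h3 : (1 : ℝ) ≤ 2 * π * ((2 : ℝ) ^ (-j) * ‖ξ‖) := by
        nlinarith [Real.pi_gt_three]
      calc (1 : ℝ) ≤ (2 * π * ((2 : ℝ) ^ (-j) * ‖ξ‖)) ^ 2 := by nlinarith
        _ = _ := by ring
    calc ‖𝓕 (f - lowPass χ j f) ξ‖ ^ 2 ≤ ‖𝓕 f ξ‖ ^ 2 := by gcongr
      _ ≤ _ := le_mul_of_one_le_left (by positivity) h2

theorem two_rpow_int_add_one_mul (α : ℝ) (j : ℤ) :
    (2 : ℝ) ^ (((j + 1 : ℤ) : ℝ) * α) = 2 ^ ((j : ℝ) * α) * 2 ^ α := by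
  rw [← Real.rpow_add two_pos]
  push_cast
  ring_nf

theorem tendsto_two_rpow_int_add_mul {β : ℝ} (hβ : β < 0) (N : ℤ) :
    Tendsto (fun n : ℕ => (2 : ℝ) ^ (((N + n : ℤ) : ℝ) * β)) atTop (nhds 0) := by
  have h : ∀ n : ℕ, (2 : ℝ) ^ (((N + n : ℤ) : ℝ) * β) = 2 ^ ((N : ℝ) * β) * (2 ^ β) ^ n := by
    intro n
    rw [← Real.rpow_natCast, ← Real.rpow_mul two_pos.le, ← Real.rpow_add two_pos]
    push_cast
    ring_nf
  simp_rw [h]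
  simpa using (tendsto_pow_atTop_nhds_zero_of_lt_one (by positivity)
    (Real.rpow_lt_one_of_one_lt_of_neg one_lt_two hβ)).const_mul ((2 : ℝ) ^ ((N : ℝ) * β))

theorem tendsto_lowPass_neg {χ : E3 → ℝ} (hχ : IsLPCutoff χ) (f : 𝓢(E3, ℂ)) (N : ℤ) (x : E3) :
    Tendsto (fun n : ℕ => lowPass χ (N - n) f x) atTop (nhds 0) := by
  have h1 : ∀ n : ℕ, ‖lowPass χ (N - n) f x‖
      ≤ ∫ ξ, ‖((χ ((2 : ℝ) ^ (-(N - n : ℤ)) • ξ) : ℝ) : ℂ) * 𝓕 f ξ‖ := by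
    intro n
    rw [← FourierTransform.fourierInv_fourier_eq (F := 𝓢(E3, ℂ)) (lowPass χ (N - n) f),
      SchwartzMap.fourierInv_coe, Real.fourierInv_eq]
    refine (norm_integral_le_integral_norm _).trans (le_of_eq ?_)
    congr 1
    ext ξ
    rw [Circle.norm_smul, fourier_lowPass hχ]
  refine squeeze_zero_norm h1 ?_
  have h2 : ∫ _ : E3, (0 : ℝ) = 0 := by simp
  rw [← h2]
  refine tendsto_integral_of_dominated_convergence (fun ξ => ‖𝓕 f ξ‖) (fun n => ?_)
    (𝓕 f).integrable.norm (fun n => ?_) ?_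
  · have := (hχ.hasTemperateGrowth_dilate (N - n)).1.continuous
    have h3 : Continuous (𝓕 f : 𝓢(E3, ℂ)) := (𝓕 f).continuous
    fun_prop
  · refine Eventually.of_forall fun ξ => ?_
    rw [norm_norm, norm_mul, Complex.norm_real, Real.norm_of_nonneg (hχ.2.2.2.1 _)]
    exact mul_le_of_le_one_left (norm_nonneg _) (hχ.2.2.2.2.1 _)
  · have h0 : ∀ᵐ ξ : E3, ξ ≠ 0 := by simp [ae_iff]
    filter_upwards [h0] with ξ hξ
    have h4 : Tendsto (fun n : ℕ => (2 : ℝ) ^ n * ((2 : ℝ) ^ (-N) * ‖ξ‖)) atTop atTop :=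
      (tendsto_pow_atTop_atTop_of_one_lt one_lt_two).atTop_mul_const (by positivity)
    refine tendsto_const_nhds.congr' ?_
    filter_upwards [h4.eventually_gt_atTop (4 / 3)] with n hn
    rw [hχ.2.2.2.2.2.2]
    · simp
    · rw [norm_smul, Real.norm_of_nonneg (by positivity)]
      have : (2 : ℝ) ^ (-(N - n : ℤ)) = 2 ^ n * 2 ^ (-N) := by
        rw [← zpow_natCast, ← zpow_add₀ two_ne_zero]
        ring_nf
      rw [this]
      linarith

/-- The Littlewood–Paley blocks of `f` satisfy `‖Δ_j f‖_∞ ≤ A 2^{jα}`. -/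
def BlockBound (χ : E3 → ℝ) (α A : ℝ) (f : 𝓢(E3, ℂ)) : Prop :=
  ∀ (j : ℤ) (x : E3), ‖lowPass χ (j + 1) f x - lowPass χ j f x‖ ≤ A * 2 ^ ((j : ℝ) * α)

theorem BlockBound.norm_lowPass_le {χ : E3 → ℝ} (hχ : IsLPCutoff χ) {α A : ℝ} (hα : 0 < α)
    (hA : 0 ≤ A) {f : 𝓢(E3, ℂ)} (hf : BlockBound χ α A f) (N : ℤ) (x : E3) :
    ‖lowPass χ N f x‖ ≤ A * 2 ^ ((N : ℝ) * α) / (2 ^ α - 1) := by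
  have hα' : (0 : ℝ) < 2 ^ α - 1 := sub_pos.2 (Real.one_lt_rpow one_lt_two hα)
  have key : ∀ n : ℕ, ‖lowPass χ N f x‖ ≤ ‖lowPass χ (N - n) f x‖
      + A * (2 ^ ((N : ℝ) * α) - 2 ^ (((N - n : ℤ) : ℝ) * α)) / (2 ^ α - 1) := by
    intro n
    induction n with
    | zero => simp
    | succ n ih =>
      refine ih.trans ?_
      have e : (N - (n : ℕ) : ℤ) = (N - (n + 1 : ℕ)) + 1 := by push_cast; ring
      have h1 := hf (N - (n + 1 : ℕ)) x
      rw [← e] at h1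
      have h2 := two_rpow_int_add_one_mul α (N - (n + 1 : ℕ))
      rw [← e] at h2
      have h3 : ‖lowPass χ (N - n) f x‖ ≤ ‖lowPass χ (N - (n + 1 : ℕ)) f x‖
          + A * 2 ^ (((N - (n + 1 : ℕ) : ℤ) : ℝ) * α) := by
        have := norm_sub_norm_le (lowPass χ (N - n) f x) (lowPass χ (N - (n + 1 : ℕ)) f x)
        linarith
      have h4 : A * 2 ^ (((N - (n + 1 : ℕ) : ℤ) : ℝ) * α)
          = A * (2 ^ (((N - n : ℤ) : ℝ) * α) - 2 ^ (((N - (n + 1 : ℕ) : ℤ) : ℝ) * α))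
            / (2 ^ α - 1) := by
        rw [h2]
        field_simp
      rw [h4] at h3
      have h5 : A * (2 ^ ((N : ℝ) * α) - 2 ^ (((N - (n + 1 : ℕ) : ℤ) : ℝ) * α)) / (2 ^ α - 1)
          = A * (2 ^ ((N : ℝ) * α) - 2 ^ (((N - n : ℤ) : ℝ) * α)) / (2 ^ α - 1)
            + A * (2 ^ (((N - n : ℤ) : ℝ) * α) - 2 ^ (((N - (n + 1 : ℕ) : ℤ) : ℝ) * α))
              / (2 ^ α - 1) := by ring
      linarith
  have h5 : ∀ n : ℕ, ‖lowPass χ N f x‖ ≤ ‖lowPass χ (N - n) f x‖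
      + A * 2 ^ ((N : ℝ) * α) / (2 ^ α - 1) := by
    intro n
    refine (key n).trans ?_
    gcongr
    exact sub_le_self _ (by positivity)
  have h6 := ((tendsto_lowPass_neg hχ f N x).norm.add_const
    (A * 2 ^ ((N : ℝ) * α) / (2 ^ α - 1)))
  simpa using ge_of_tendsto' h6 h5

theorem integrable_schwartz_mul {𝕜 : Type*} [RCLike 𝕜] (f g : 𝓢(E3, 𝕜)) :
    Integrable fun x => f x * g x := by
  have := (SchwartzMap.smulLeftCLM 𝕜 (⇑f) g).integrable (μ := volume)
  rw [SchwartzMap.smulLeftCLM_apply f.hasTemperateGrowth] at this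
  exact this

theorem integrable_schwartz_mul_mul {𝕜 : Type*} [RCLike 𝕜] (f g h : 𝓢(E3, 𝕜)) :
    Integrable fun x => f x * g x * h x := by
  have := integrable_schwartz_mul (SchwartzMap.smulLeftCLM 𝕜 (⇑f) g) h
  rw [SchwartzMap.smulLeftCLM_apply f.hasTemperateGrowth] at this
  exact this

theorem norm_integral_mul_mul_le_of_bound {f g h : 𝓢(E3, ℂ)} {B E : ℝ}
    (hf : ∀ x, ‖f x‖ ≤ B) (hg : l2sq g ≤ E) (hh : l2sq h ≤ E) :
    ‖∫ x, f x * g x * h x‖ ≤ B * E := by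
  have hB : 0 ≤ B := (norm_nonneg _).trans (hf 0)
  calc ‖∫ x, f x * g x * h x‖ ≤ ∫ x, B * ((‖g x‖ ^ 2 + ‖h x‖ ^ 2) / 2) := by
        refine norm_integral_le_of_norm_le
          ((((integrable_norm_sq g).add (integrable_norm_sq h)).div_const 2).const_mul B)
          (Eventually.of_forall fun x => ?_)
        rw [norm_mul, norm_mul, mul_assoc]
        have := hf x
        gcongr
        nlinarith [sq_nonneg (‖g x‖ - ‖h x‖)]
    _ = B * ((l2sq g + l2sq h) / 2) := by
        rw [integral_const_mul, integral_div,
          integral_add (integrable_norm_sq g) (integrable_norm_sq h)]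
        rfl
    _ ≤ B * E := by gcongr; linarith

theorem norm_integral_mul_mul_le_add {f g h F G H : 𝓢(E3, ℂ)} {B E : ℝ}
    (hfF : ∀ x, ‖f x - F x‖ ≤ B) (hgG : ∀ x, ‖g x - G x‖ ≤ B) (hhH : ∀ x, ‖h x - H x‖ ≤ B)
    (hg : l2sq g ≤ E) (hh : l2sq h ≤ E) (hF : l2sq F ≤ E) (hG : l2sq G ≤ E) :
    ‖∫ x, f x * g x * h x‖ ≤ 3 * B * E + ‖∫ x, F x * G x * H x‖ := by
  have e : ∫ x, f x * g x * h x = (∫ x, (f - F) x * g x * h x) + (∫ x, (g - G) x * F x * h x)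
      + (∫ x, (h - H) x * F x * G x) + ∫ x, F x * G x * H x := by
    rw [← integral_add (integrable_schwartz_mul_mul _ _ _) (integrable_schwartz_mul_mul _ _ _),
      ← integral_add ((integrable_schwartz_mul_mul _ _ _).add (integrable_schwartz_mul_mul _ _ _))
        (integrable_schwartz_mul_mul _ _ _),
      ← integral_add (((integrable_schwartz_mul_mul _ _ _).add
        (integrable_schwartz_mul_mul _ _ _)).add (integrable_schwartz_mul_mul _ _ _))
        (integrable_schwartz_mul_mul _ _ _)]
    congr 1
    ext x
    simp only [_root_.sub_apply]
    ring
  have h1 := norm_integral_mul_mul_le_of_bound (f := f - F) hfF hg hh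
  have h2 := norm_integral_mul_mul_le_of_bound (f := g - G) hgG hF hh
  have h3 := norm_integral_mul_mul_le_of_bound (f := h - H) hhH hF hG
  rw [e]
  refine (norm_add_le _ _).trans ?_
  gcongr
  refine (norm_add_le _ _).trans ((add_le_add (norm_add_le _ _) le_rfl).trans ?_)
  linarith

theorem norm_integral_highPass_le {χ : E3 → ℝ} (hχ : IsLPCutoff χ) {α A D : ℝ} (hα : 0 < α)
    (hα2 : α < 2) (hA : 0 ≤ A) {f g h : 𝓢(E3, ℂ)} (hf : BlockBound χ α A f)
    (hg : BlockBound χ α A g) (hh : BlockBound χ α A h) (hfD : ∑ i, l2sq (spd i f) ≤ D)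
    (hgD : ∑ i, l2sq (spd i g) ≤ D) (hhD : ∑ i, l2sq (spd i h) ≤ D) (N : ℤ) :
    ‖∫ x, (f - lowPass χ N f) x * (g - lowPass χ N g) x * (h - lowPass χ N h) x‖
      ≤ 3 * A * D / (1 - 2 ^ (α - 2)) * 2 ^ ((N : ℝ) * (α - 2)) := by
  have hD : 0 ≤ D := (Finset.sum_nonneg fun i _ => l2sq_nonneg _).trans hfD
  have hr : (0 : ℝ) < 1 - 2 ^ (α - 2) :=
    sub_pos.2 (Real.rpow_lt_one_of_one_lt_of_neg one_lt_two (by linarith))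
  have hq : ∀ j : ℤ, (2 : ℝ) ^ ((j : ℝ) * α) * ((2 : ℝ) ^ (-j)) ^ 2
      = 2 ^ ((j : ℝ) * (α - 2)) := by
    intro j
    rw [← zpow_natCast, ← zpow_mul, ← Real.rpow_intCast, ← Real.rpow_add two_pos]
    congr 1
    push_cast
    ring
  have hL2 : ∀ (k : 𝓢(E3, ℂ)), ∑ i, l2sq (spd i k) ≤ D → ∀ j : ℤ,
      l2sq (k - lowPass χ j k) ≤ ((2 : ℝ) ^ (-j)) ^ 2 * D := fun k hk j =>
    (l2sq_sub_lowPass_le_grad hχ j k).trans (by gcongr)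
  have hL2' : ∀ (k : 𝓢(E3, ℂ)), ∑ i, l2sq (spd i k) ≤ D → ∀ j : ℤ,
      l2sq (k - lowPass χ (j + 1) k) ≤ ((2 : ℝ) ^ (-j)) ^ 2 * D := fun k hk j =>
    (hL2 k hk (j + 1)).trans (by
      gcongr
      · norm_num
      · linarith)
  have hblock : ∀ (k : 𝓢(E3, ℂ)), BlockBound χ α A k → ∀ (j : ℤ) (x : E3),
      ‖(k - lowPass χ j k) x - (k - lowPass χ (j + 1) k) x‖ ≤ A * 2 ^ ((j : ℝ) * α) := by
    intro k hk j x
    refine le_trans (le_of_eq ?_) (hk j x)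
    simp only [_root_.sub_apply]
    congr 1
    ring
  set I : ℤ → ℝ := fun j => ‖∫ x, (f - lowPass χ j f) x * (g - lowPass χ j g) x
    * (h - lowPass χ j h) x‖ with hI
  have hstep : ∀ j, I j ≤ 3 * A * D * 2 ^ ((j : ℝ) * (α - 2)) + I (j + 1) := by
    intro j
    have := norm_integral_mul_mul_le_add (hblock f hf j) (hblock g hg j) (hblock h hh j)
      (hL2 g hgD j) (hL2 h hhD j) (hL2' f hfD j) (hL2' g hgD j)
    refine this.trans (le_of_eq ?_)
    rw [← hq]
    ring
  have key : ∀ n : ℕ, I N ≤ 3 * A * D / (1 - 2 ^ (α - 2)) *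
      (2 ^ ((N : ℝ) * (α - 2)) - 2 ^ (((N + n : ℤ) : ℝ) * (α - 2))) + I (N + n) := by
    intro n
    induction n with
    | zero => simp
    | succ n ih =>
      refine ih.trans ?_
      have h1 := hstep (N + n)
      have h2 := two_rpow_int_add_one_mul (α - 2) (N + n)
      have e : (N + (n + 1 : ℕ) : ℤ) = (N + n) + 1 := by push_cast; ring
      rw [e, h2]
      have h3 : 3 * A * D * 2 ^ (((N + n : ℤ) : ℝ) * (α - 2)) = 3 * A * D / (1 - 2 ^ (α - 2)) *
          (2 ^ (((N + n : ℤ) : ℝ) * (α - 2)) - 2 ^ (((N + n : ℤ) : ℝ) * (α - 2)) * 2 ^ (α - 2)) := by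
        field_simp
      linarith
  have hsup : ∀ j x, ‖(f - lowPass χ j f) x‖ ≤ SchwartzMap.seminorm ℝ 0 0 f
      + A * 2 ^ ((j : ℝ) * α) / (2 ^ α - 1) := by
    intro j x
    rw [_root_.sub_apply]
    exact (norm_sub_le _ _).trans (add_le_add (SchwartzMap.norm_le_seminorm ℝ f x)
      (hf.norm_lowPass_le hχ hα hA j x))
  have hIle : ∀ n : ℕ, I (N + n) ≤ SchwartzMap.seminorm ℝ 0 0 f * D
      * 2 ^ (((N + n : ℤ) : ℝ) * (-2)) + A / (2 ^ α - 1) * D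
      * 2 ^ (((N + n : ℤ) : ℝ) * (α - 2)) := by
    intro n
    refine (norm_integral_mul_mul_le_of_bound (hsup (N + n)) (hL2 g hgD _) (hL2 h hhD _)).trans
      (le_of_eq ?_)
    have h0 : (2 : ℝ) ^ (((N + n : ℤ) : ℝ) * (-2)) = ((2 : ℝ) ^ (-(N + n : ℤ))) ^ 2 := by
      rw [← zpow_natCast, ← zpow_mul, ← Real.rpow_intCast]
      congr 1
      push_cast
      ring
    rw [← hq, h0]
    ring
  have hlim : Tendsto (fun n : ℕ => I (N + n)) atTop (nhds 0) := by
    refine squeeze_zero (fun n => norm_nonneg _) hIle ?_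
    simpa using ((tendsto_two_rpow_int_add_mul (show (-2 : ℝ) < 0 by norm_num) N).const_mul
      (SchwartzMap.seminorm ℝ 0 0 f * D)).add
      ((tendsto_two_rpow_int_add_mul (show α - 2 < 0 by linarith) N).const_mul
      (A / (2 ^ α - 1) * D))
  have hfin : ∀ n : ℕ, I N ≤ 3 * A * D / (1 - 2 ^ (α - 2)) * 2 ^ ((N : ℝ) * (α - 2))
      + I (N + n) := by
    intro n
    refine (key n).trans ?_
    gcongr
    exact sub_le_self _ (by positivity)
  have := ge_of_tendsto' (hlim.const_add _) hfin
  rwa [add_zero] at this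

theorem exists_norm_integral_mul_mul_le {χ : E3 → ℝ} (hχ : IsLPCutoff χ) {α : ℝ} (hα : 0 < α)
    (hα2 : α < 2) : ∃ C : ℝ, 0 ≤ C ∧ ∀ (f g h : 𝓢(E3, ℂ)) (A E D : ℝ) (N : ℤ), 0 ≤ A →
      BlockBound χ α A f → BlockBound χ α A g → BlockBound χ α A h →
      l2sq f ≤ E → l2sq g ≤ E → l2sq h ≤ E → ∑ i, l2sq (spd i f) ≤ D →
      ∑ i, l2sq (spd i g) ≤ D → ∑ i, l2sq (spd i h) ≤ D →
      ‖∫ x, f x * g x * h x‖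
        ≤ C * A * (2 ^ ((N : ℝ) * α) * E + 2 ^ ((N : ℝ) * (α - 2)) * D) := by
  have hα' : (0 : ℝ) < 2 ^ α - 1 := sub_pos.2 (Real.one_lt_rpow one_lt_two hα)
  have hr : (0 : ℝ) < 1 - 2 ^ (α - 2) :=
    sub_pos.2 (Real.rpow_lt_one_of_one_lt_of_neg one_lt_two (by linarith))
  refine ⟨3 / (2 ^ α - 1) + 3 / (1 - 2 ^ (α - 2)), by positivity, ?_⟩
  intro f g h A E D N hA hf hg hh hfE hgE hhE hfD hgD hhD
  have hD : 0 ≤ D := (Finset.sum_nonneg fun i _ => l2sq_nonneg _).trans hfD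
  have hE : 0 ≤ E := (l2sq_nonneg _).trans hfE
  have hlow : ∀ (k : 𝓢(E3, ℂ)), BlockBound χ α A k → ∀ x,
      ‖k x - (k - lowPass χ N k) x‖ ≤ A * 2 ^ ((N : ℝ) * α) / (2 ^ α - 1) := by
    intro k hk x
    rw [_root_.sub_apply, sub_sub_cancel]
    exact hk.norm_lowPass_le hχ hα hA N x
  have h1 := norm_integral_mul_mul_le_add (hlow f hf) (hlow g hg) (hlow h hh) hgE hhE
    ((l2sq_sub_lowPass_le hχ N f).trans hfE) ((l2sq_sub_lowPass_le hχ N g).trans hgE)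
  have h2 := norm_integral_highPass_le hχ hα hα2 hA hf hg hh hfD hgD hhD N
  have h3 : 0 ≤ 3 / (2 ^ α - 1) * A * (2 ^ ((N : ℝ) * (α - 2)) * D) := by positivity
  have h4 : 0 ≤ 3 / (1 - 2 ^ (α - 2)) * A * (2 ^ ((N : ℝ) * α) * E) := by positivity
  calc _ ≤ _ := h1
    _ ≤ _ := add_le_add le_rfl h2
    _ = 3 / (2 ^ α - 1) * A * (2 ^ ((N : ℝ) * α) * E)
        + 3 / (1 - 2 ^ (α - 2)) * A * (2 ^ ((N : ℝ) * (α - 2)) * D) := by ring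
    _ ≤ _ := by linarith

theorem integral_norm_fourier_comp_smul (M : E3 → ℂ) {c : ℝ} (hc : 0 < c) :
    ∫ y, ‖𝓕 (fun ξ => M (c • ξ)) y‖ = ∫ y, ‖𝓕 M y‖ := by
  have h : ∀ y : E3, 𝓕 (fun ξ => M (c • ξ)) y = (c⁻¹ ^ 3 : ℝ) • 𝓕 M (c⁻¹ • y) := by
    intro y
    rw [Real.fourier_eq, Real.fourier_eq]
    have := Measure.integral_comp_smul (μ := (volume : Measure E3))
      (fun v => Real.fourierChar (-inner ℝ v (c⁻¹ • y)) • M v) c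
    rw [finrank_euclideanSpace_fin, abs_of_pos (by positivity), ← inv_pow] at this
    rw [← this]
    congr 1
    ext v
    congr 3
    rw [inner_smul_left, inner_smul_right]
    simp only [conj_trivial]
    field_simp
  simp_rw [h, norm_smul]
  rw [integral_const_mul, Measure.integral_comp_smul (μ := (volume : Measure E3))
    (fun y => ‖𝓕 M y‖) c⁻¹, finrank_euclideanSpace_fin, Real.norm_of_nonneg (by positivity),
    abs_of_pos (by positivity), smul_eq_mul, ← mul_assoc, mul_inv_cancel₀ (by positivity), one_mul]

theorem norm_fourierMultiplierCLM_le (M : 𝓢(E3, ℂ)) {c : ℝ} (hc : 0 < c) (g : 𝓢(E3, ℂ)) {B : ℝ}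
    (hB : ∀ x, ‖g x‖ ≤ B) (x : E3) :
    ‖SchwartzMap.fourierMultiplierCLM ℂ (fun ξ => M (c • ξ)) g x‖ ≤ (∫ y, ‖𝓕 M y‖) * B := by
  set Mc : 𝓢(E3, ℂ) := SchwartzMap.compCLMOfContinuousLinearEquiv ℂ
    (ContinuousLinearEquiv.smulLeft (R₁ := ℝ) (M₁ := E3) (Units.mk0 c hc.ne')) M with hMc
  have hMc_apply : ∀ ξ, Mc ξ = M (c • ξ) := fun ξ => rfl
  have hg : (fun ξ => M (c • ξ)).HasTemperateGrowth := Mc.hasTemperateGrowth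
  set G := SchwartzMap.compSubConstCLM ℂ (-x) g with hG
  have hG_apply : ∀ y, G y = g (y + x) := fun y => by simp [hG]
  have e : SchwartzMap.fourierMultiplierCLM ℂ (fun ξ => M (c • ξ)) g x
      = ∫ y, 𝓕 Mc y * G y := by
    rw [SchwartzMap.integral_fourier_mul_eq, SchwartzMap.fourierMultiplierCLM_apply,
      SchwartzMap.fourierInv_coe, Real.fourierInv_eq]
    congr 1
    ext ξ
    rw [SchwartzMap.smulLeftCLM_apply_apply hg, hMc_apply]
    have : 𝓕 G ξ = Real.fourierChar (inner ℝ ξ x) • 𝓕 g ξ := by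
      rw [SchwartzMap.fourier_coe, SchwartzMap.fourier_coe,
        show ⇑G = ⇑g ∘ fun y => y + x from funext hG_apply, real_inner_comm]
      exact congrFun (VectorFourier.fourierIntegral_comp_add_right Real.fourierChar volume
        (innerₗ E3) (⇑g) x) ξ
    rw [this, smul_eq_mul, mul_smul_comm]
  rw [e]
  have h1 : ∫ y, ‖𝓕 M y‖ = ∫ y, ‖𝓕 Mc y‖ := (integral_norm_fourier_comp_smul (⇑M) hc).symm
  rw [h1, ← integral_mul_const]
  refine norm_integral_le_of_norm_le ((𝓕 Mc).integrable.norm.mul_const _)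
    (Eventually.of_forall fun y => ?_)
  rw [norm_mul, hG_apply]
  exact mul_le_mul_of_nonneg_left (hB _) (norm_nonneg _)

/-- The symbol `φ̂(ξ) ξ_i ξ_a / |ξ|²` of a localized double Riesz transform. -/
def rieszSymbol (χ : E3 → ℝ) (i a : Fin 3) (ξ : E3) : ℂ :=
  (((χ ((2 : ℝ)⁻¹ • ξ) - χ ξ) * (ξ i * ξ a / ‖ξ‖ ^ 2) : ℝ) : ℂ)

theorem contDiff_rieszSymbol {χ : E3 → ℝ} (hχ : IsLPCutoff χ) (i a : Fin 3) :
    ContDiff ℝ ((⊤ : ℕ∞) : WithTop ℕ∞) (rieszSymbol χ i a) := by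
  have hc : ContDiff ℝ ((⊤ : ℕ∞) : WithTop ℕ∞) χ := hχ.1
  rw [contDiff_iff_contDiffAt]
  intro ξ
  by_cases hξ : ξ = 0
  · have h : rieszSymbol χ i a =ᶠ[nhds ξ] fun _ => 0 := by
      rw [hξ]
      filter_upwards [Metric.ball_mem_nhds (0 : E3) (show (0 : ℝ) < 3 / 4 by norm_num)] with η hη
      rw [mem_ball_zero_iff] at hη
      rw [rieszSymbol, hχ.2.2.2.2.2.1 η hη.le, hχ.2.2.2.2.2.1]
      · simp
      · rw [norm_smul, Real.norm_of_nonneg (by positivity)]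
        linarith [norm_nonneg η]
    exact contDiffAt_const.congr_of_eventuallyEq h
  · unfold rieszSymbol
    refine Complex.ofRealCLM.contDiff.contDiffAt.comp ξ ?_
    have h1 : ‖ξ‖ ^ 2 ≠ 0 := by positivity
    refine ContDiffAt.mul (by fun_prop) (ContDiffAt.div (by fun_prop) ?_ h1)
    exact (contDiff_norm_sq ℝ).contDiffAt

theorem hasCompactSupport_rieszSymbol {χ : E3 → ℝ} (hχ : IsLPCutoff χ) (i a : Fin 3) :
    HasCompactSupport (rieszSymbol χ i a) := by
  refine HasCompactSupport.of_support_subset_isCompact (isCompact_closedBall (0 : E3) (8 / 3))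
    fun ξ hξ => ?_
  rw [mem_closedBall_zero_iff]
  by_contra! h
  refine hξ ?_
  rw [rieszSymbol, hχ.2.2.2.2.2.2 ξ (by linarith), hχ.2.2.2.2.2.2]
  · simp
  · rw [norm_smul, Real.norm_of_nonneg (by positivity)]
    linarith

/-- `rieszSymbol` as a Schwartz function. -/
def rieszSchwartz {χ : E3 → ℝ} (hχ : IsLPCutoff χ) (i a : Fin 3) : 𝓢(E3, ℂ) :=
  (hasCompactSupport_rieszSymbol hχ i a).toSchwartzMap (contDiff_rieszSymbol hχ i a)

theorem rieszSchwartz_apply {χ : E3 → ℝ} (hχ : IsLPCutoff χ) (i a : Fin 3) (ξ : E3) :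
    rieszSchwartz hχ i a ξ = rieszSymbol χ i a ξ := rfl

theorem rieszSymbol_mul_fattened {χ : E3 → ℝ} (hχ : IsLPCutoff χ) (i a : Fin 3) (j : ℤ)
    (ξ : E3) : rieszSymbol χ i a ((2 : ℝ) ^ (-j) • ξ)
      * (((χ ((2 : ℝ) ^ (-(j + 2)) • ξ) : ℝ) : ℂ) - ((χ ((2 : ℝ) ^ (-(j - 1)) • ξ) : ℝ) : ℂ))
      = rieszSymbol χ i a ((2 : ℝ) ^ (-j) • ξ) := by
  set η := (2 : ℝ) ^ (-j) • ξ with hη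
  have e1 : (2 : ℝ) ^ (-(j + 2)) • ξ = (4 : ℝ)⁻¹ • η := by
    rw [hη, smul_smul, neg_add, zpow_add₀ two_ne_zero]
    congr 1
    norm_num [mul_comm]
  have e2 : (2 : ℝ) ^ (-(j - 1)) • ξ = (2 : ℝ) • η := by
    rw [hη, smul_smul, neg_sub, sub_eq_add_neg, zpow_add₀ two_ne_zero]
    norm_num
  rw [e1, e2]
  obtain ⟨-, -, -, -, -, h1, h0⟩ := hχ
  have n1 : ‖(4 : ℝ)⁻¹ • η‖ = 4⁻¹ * ‖η‖ := by
    rw [norm_smul, Real.norm_of_nonneg (by positivity)]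
  have n2 : ‖(2 : ℝ) • η‖ = 2 * ‖η‖ := by
    rw [norm_smul, Real.norm_of_nonneg (by positivity)]
  have n3 : ‖(2 : ℝ)⁻¹ • η‖ = 2⁻¹ * ‖η‖ := by
    rw [norm_smul, Real.norm_of_nonneg (by positivity)]
  by_cases hs : ‖η‖ ≤ 3 / 4
  · have : rieszSymbol χ i a η = 0 := by
      rw [rieszSymbol, h1 η hs, h1 _ (by rw [n3]; linarith [norm_nonneg η])]
      simp
    rw [this, zero_mul]
  by_cases hl : 8 / 3 < ‖η‖
  · have : rieszSymbol χ i a η = 0 := by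
      rw [rieszSymbol, h0 η (by linarith), h0 _ (by rw [n3]; linarith)]
      simp
    rw [this, zero_mul]
  push Not at hs hl
  rw [h1 _ (by rw [n1]; linarith), h0 _ (by rw [n2]; linarith)]
  simp

theorem schwartz_ext_fourier {f g : 𝓢(E3, ℂ)} (h : ∀ ξ, 𝓕 f ξ = 𝓕 g ξ) : f = g := by
  rw [← FourierTransform.fourierInv_fourier_eq (F := 𝓢(E3, ℂ)) f,
    ← FourierTransform.fourierInv_fourier_eq (F := 𝓢(E3, ℂ)) g, SchwartzMap.ext h]

theorem lowPass_succ_sub_spd_eq {χ : E3 → ℝ} (hχ : IsLPCutoff χ) (U : Fin 3 → 𝓢(E3, ℂ))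
    (hdiv : ∑ i, spd i (U i) = 0) (i b : Fin 3) (j : ℤ) :
    lowPass χ (j + 1) (spd i (U b)) - lowPass χ j (spd i (U b))
      = ∑ a, SchwartzMap.fourierMultiplierCLM ℂ
          (fun ξ => rieszSchwartz hχ i a ((2 : ℝ) ^ (-j) • ξ))
          (lowPass χ (j + 2) (spd a (U b) - spd b (U a))
            - lowPass χ (j - 1) (spd a (U b) - spd b (U a))) := by
  have fsub : ∀ (f g : 𝓢(E3, ℂ)) (ξ : E3), 𝓕 (f - g) ξ = 𝓕 f ξ - 𝓕 g ξ := by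
    intro f g ξ
    rw [sub_eq_add_neg, FourierTransform.fourier_add, FourierTransform.fourier_neg]
    simp only [_root_.add_apply, _root_.neg_apply]
    ring
  have fsum : ∀ (F : Fin 3 → 𝓢(E3, ℂ)) (ξ : E3), 𝓕 (∑ a, F a) ξ = ∑ a, 𝓕 (F a) ξ := by
    intro F ξ
    simp only [Fin.sum_univ_three, FourierTransform.fourier_add, _root_.add_apply]
  refine schwartz_ext_fourier fun ξ => ?_
  have hg : ∀ a, (fun ξ => rieszSchwartz hχ i a ((2 : ℝ) ^ (-j) • ξ)).HasTemperateGrowth := by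
    intro a
    have := (rieszSchwartz hχ i a).hasTemperateGrowth
    fun_prop
  have hdiv' : ∑ a, (ξ a : ℂ) * 𝓕 (U a) ξ = 0 := by
    have h1 : 𝓕 (∑ i, spd i (U i)) ξ = 0 := by
      rw [hdiv, FourierTransform.fourier_zero]
      rfl
    rw [fsum] at h1
    simp_rw [fourier_spd] at h1
    have h2 : (2 * π * Complex.I) * ∑ a, (ξ a : ℂ) * 𝓕 (U a) ξ = 0 := by
      rw [← h1, Finset.mul_sum]
      exact Finset.sum_congr rfl fun a _ => by ring
    have h3 : (2 * π * Complex.I : ℂ) ≠ 0 := by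
      simp [Real.pi_ne_zero]
    exact (mul_eq_zero.1 h2).resolve_left h3
  have e1 : (2 : ℝ) ^ (-(j + 1)) • ξ = (2 : ℝ)⁻¹ • (2 : ℝ) ^ (-j) • ξ := by
    rw [smul_smul, neg_add, zpow_add₀ two_ne_zero]
    congr 1
    norm_num [mul_comm]
  rw [fsub, fourier_lowPass hχ, fourier_lowPass hχ, fsum]
  simp_rw [fourier_fourierMultiplierCLM_apply (hg _), fsub, fourier_lowPass hχ, fsub,
    rieszSchwartz_apply]
  have h5 : ∀ a, rieszSymbol χ i a ((2 : ℝ) ^ (-j) • ξ) *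
      (((χ ((2 : ℝ) ^ (-(j + 2)) • ξ) : ℝ) : ℂ) * (𝓕 (spd a (U b)) ξ - 𝓕 (spd b (U a)) ξ)
        - ((χ ((2 : ℝ) ^ (-(j - 1)) • ξ) : ℝ) : ℂ) * (𝓕 (spd a (U b)) ξ - 𝓕 (spd b (U a)) ξ))
      = rieszSymbol χ i a ((2 : ℝ) ^ (-j) • ξ) * (𝓕 (spd a (U b)) ξ - 𝓕 (spd b (U a)) ξ) := by
    intro a
    rw [← sub_mul, ← mul_assoc, rieszSymbol_mul_fattened hχ]
  simp_rw [h5, fourier_spd]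
  rw [← sub_mul]
  by_cases hξ : ξ = 0
  · simp [hξ, rieszSymbol]
  have hn : (‖ξ‖ : ℂ) ^ 2 ≠ 0 := by
    have : ‖ξ‖ ≠ 0 := by positivity
    exact_mod_cast pow_ne_zero 2 this
  have hns : (‖ξ‖ : ℂ) ^ 2 = ∑ a, (ξ a : ℂ) ^ 2 := by
    rw [← Complex.ofReal_pow, EuclideanSpace.norm_sq_eq]
    push_cast
    simp [← Complex.ofReal_pow]
  have h6 : ∀ a, rieszSymbol χ i a ((2 : ℝ) ^ (-j) • ξ)
      = (((χ ((2 : ℝ) ^ (-(j + 1)) • ξ) : ℝ) : ℂ) - ((χ ((2 : ℝ) ^ (-j) • ξ) : ℝ) : ℂ))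
        * (ξ i * ξ a / (‖ξ‖ : ℂ) ^ 2) := by
    intro a
    have h7 : ((2 : ℝ) ^ (-j) • ξ) i * ((2 : ℝ) ^ (-j) • ξ) a / ‖(2 : ℝ) ^ (-j) • ξ‖ ^ 2
        = ξ i * ξ a / ‖ξ‖ ^ 2 := by
      rw [norm_smul, Real.norm_of_nonneg (by positivity)]
      simp only [PiLp.smul_apply, smul_eq_mul]
      have : (2 : ℝ) ^ (-j) ≠ 0 := by positivity
      field_simp
    rw [rieszSymbol, h7, e1]
    push_cast
    ring
  simp_rw [h6]
  rw [Fin.sum_univ_three] at hdiv' hns ⊢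
  have h8 : ((ξ i : ℂ) * 𝓕 (U b) ξ) * (‖ξ‖ : ℂ) ^ 2 = ξ i * (ξ 0 * (ξ 0 * 𝓕 (U b) ξ - ξ b * 𝓕 (U 0) ξ)
      + ξ 1 * (ξ 1 * 𝓕 (U b) ξ - ξ b * 𝓕 (U 1) ξ) + ξ 2 * (ξ 2 * 𝓕 (U b) ξ - ξ b * 𝓕 (U 2) ξ)) := by
    rw [hns]
    linear_combination ξ i * ξ b * hdiv'
  rw [← eq_div_iff hn] at h8
  linear_combination (((χ ((2 : ℝ) ^ (-(j + 1)) • ξ) : ℝ) : ℂ)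
    - ((χ ((2 : ℝ) ^ (-j) • ξ) : ℝ) : ℂ)) * (2 * π * Complex.I) * h8

theorem BlockBound.norm_lowPass_sub_le {χ : E3 → ℝ} {α A : ℝ} (hα : 0 < α) (hA : 0 ≤ A)
    {f : 𝓢(E3, ℂ)} (hf : BlockBound χ α A f) (j : ℤ) (x : E3) :
    ‖(lowPass χ (j + 2) f - lowPass χ (j - 1) f) x‖ ≤ 3 * 2 ^ α * A * 2 ^ ((j : ℝ) * α) := by
  have h1 := hf (j + 1) x
  have h2 := hf j x
  have h3 := hf (j - 1) x
  rw [show j + 1 + 1 = j + 2 by ring] at h1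
  rw [show j - 1 + 1 = j by ring] at h3
  have e1 := two_rpow_int_add_one_mul α j
  have e2 := two_rpow_int_add_one_mul α (j - 1)
  rw [show j - 1 + 1 = j by ring] at e2
  have hone : (1 : ℝ) ≤ 2 ^ α := Real.one_le_rpow one_le_two hα.le
  rw [e1] at h1
  have p1 : 0 ≤ A * (2 : ℝ) ^ ((j : ℝ) * α) := by positivity
  have p2 : 0 ≤ A * (2 : ℝ) ^ (((j - 1 : ℤ) : ℝ) * α) := by positivity
  have h4 : A * (2 : ℝ) ^ (((j - 1 : ℤ) : ℝ) * α) ≤ A * 2 ^ ((j : ℝ) * α) := by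
    rw [e2]
    nlinarith
  have h5 : A * (2 : ℝ) ^ ((j : ℝ) * α) ≤ A * 2 ^ ((j : ℝ) * α) * 2 ^ α := by nlinarith
  rw [_root_.sub_apply]
  calc _ = ‖(lowPass χ (j + 2) f x - lowPass χ (j + 1) f x)
        + (lowPass χ (j + 1) f x - lowPass χ j f x)
        + (lowPass χ j f x - lowPass χ (j - 1) f x)‖ := by congr 1; ring
    _ ≤ _ := norm_add₃_le
    _ ≤ _ := by linarith

theorem exists_blockBound_spd {χ : E3 → ℝ} (hχ : IsLPCutoff χ) {α : ℝ} (hα : 0 < α) :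
    ∃ C : ℝ, 0 ≤ C ∧ ∀ (U : Fin 3 → 𝓢(E3, ℂ)) (A : ℝ), 0 ≤ A → ∑ i, spd i (U i) = 0 →
      (∀ a b, BlockBound χ α A (spd a (U b) - spd b (U a))) →
      ∀ i b, BlockBound χ α (C * A) (spd i (U b)) := by
  set c : Fin 3 → Fin 3 → ℝ := fun i a => ∫ y, ‖𝓕 (rieszSchwartz hχ i a) y‖ with hc
  have hc0 : ∀ i a, 0 ≤ c i a := fun i a => integral_nonneg fun _ => norm_nonneg _
  have hs0 : ∀ i, 0 ≤ ∑ a, c i a := fun i => Finset.sum_nonneg fun a _ => hc0 i a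
  refine ⟨(∑ i, ∑ a, c i a) * (3 * 2 ^ α),
    mul_nonneg (Finset.sum_nonneg fun i _ => hs0 i) (by positivity), ?_⟩
  intro U A hA hdiv hW i b j x
  have e := congrArg (fun f : 𝓢(E3, ℂ) => f x) (lowPass_succ_sub_spd_eq hχ U hdiv i b j)
  simp only [_root_.sub_apply (lowPass χ (j + 1) (spd i (U b)))] at e
  rw [e, _root_.sum_apply]
  calc _ ≤ ∑ a, c i a * (3 * 2 ^ α * A * 2 ^ ((j : ℝ) * α)) :=
        (norm_sum_le _ _).trans (Finset.sum_le_sum fun a _ =>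
          norm_fourierMultiplierCLM_le (rieszSchwartz hχ i a) (by positivity) _
            ((hW a b).norm_lowPass_sub_le hα hA j) x)
    _ = (∑ a, c i a) * (3 * 2 ^ α * A * 2 ^ ((j : ℝ) * α)) := by rw [Finset.sum_mul]
    _ ≤ (∑ i, ∑ a, c i a) * (3 * 2 ^ α * A * 2 ^ ((j : ℝ) * α)) := by
        refine mul_le_mul_of_nonneg_right (Finset.single_le_sum (f := fun i => ∑ a, c i a)
          (fun i _ => hs0 i) (Finset.mem_univ i)) (by positivity)
    _ = _ := by ring

theorem spd_apply {F : Type*} [NormedAddCommGroup F] [NormedSpace ℝ F] (i : Fin 3)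
    (f : 𝓢(E3, F)) (x : E3) : spd i f x = fderiv ℝ f x (EuclideanSpace.single i 1) :=
  SchwartzMap.lineDerivOp_apply_eq_fderiv _ _ _

theorem pd_coe (i : Fin 3) (f : 𝓢(E3, ℝ)) : pd i ⇑f = ⇑(spd i f) :=
  funext fun x => (spd_apply i f x).symm

/-- A real Schwartz function viewed as a complex one. -/
def cx (f : 𝓢(E3, ℝ)) : 𝓢(E3, ℂ) := SchwartzMap.postcompCLM Complex.ofRealCLM f

theorem cx_apply (f : 𝓢(E3, ℝ)) (x : E3) : cx f x = (f x : ℂ) := rfl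

theorem spd_cx (i : Fin 3) (f : 𝓢(E3, ℝ)) : spd i (cx f) = cx (spd i f) := by
  ext x
  rw [cx_apply, spd_apply, spd_apply]
  have := (Complex.ofRealCLM.hasFDerivAt.comp x f.differentiableAt.hasFDerivAt).fderiv
  change fderiv ℝ (fun y => Complex.ofRealCLM (f y)) x _ = _
  rw [show (fun y => Complex.ofRealCLM (f y)) = ⇑Complex.ofRealCLM ∘ ⇑f from rfl, this]
  rfl

theorem l2sq_cx (f : 𝓢(E3, ℝ)) : l2sq (cx f) = ∫ x, f x ^ 2 := by
  simp [l2sq, cx_apply]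

theorem integrable_sq (f : 𝓢(E3, ℝ)) : Integrable fun x => f x ^ 2 := by
  simpa only [sq] using integrable_schwartz_mul f f

/-- The squared `L²` norm of the gradient of a vector field. -/
def gradSq (u : Fin 3 → 𝓢(E3, ℝ)) : ℝ := ∑ k, ∑ j, ∫ x, spd k (u j) x ^ 2

/-- The squared `L²` norm of the Hessian of a vector field. -/
def hessSq (u : Fin 3 → 𝓢(E3, ℝ)) : ℝ := ∑ k, ∑ j, ∑ l, ∫ x, spd l (spd k (u j)) x ^ 2

/-- The trilinear form `∑ ∫ ∂ₖuⱼ ∂ₖuᵢ ∂ᵢuⱼ`. -/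
def stretchForm (u : Fin 3 → 𝓢(E3, ℝ)) : ℝ :=
  ∑ k, ∑ j, ∑ i, ∫ x, spd k (u j) x * spd k (u i) x * spd i (u j) x

theorem single_le_sum_sum {f : Fin 3 → Fin 3 → ℝ} (hf : ∀ k j, 0 ≤ f k j) (k j : Fin 3) :
    f k j ≤ ∑ k, ∑ j, f k j :=
  (Finset.single_le_sum (f := fun j => f k j) (fun j _ => hf k j) (Finset.mem_univ j)).trans
    (Finset.single_le_sum (f := fun k => ∑ j, f k j)
      (fun k _ => Finset.sum_nonneg fun j _ => hf k j) (Finset.mem_univ k))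

theorem gradSq_nonneg (u : Fin 3 → 𝓢(E3, ℝ)) : 0 ≤ gradSq u :=
  Finset.sum_nonneg fun _ _ => Finset.sum_nonneg fun _ _ => integral_nonneg fun _ => sq_nonneg _

theorem hessSq_nonneg (u : Fin 3 → 𝓢(E3, ℝ)) : 0 ≤ hessSq u :=
  Finset.sum_nonneg fun _ _ => Finset.sum_nonneg fun _ _ => Finset.sum_nonneg fun _ _ =>
    integral_nonneg fun _ => sq_nonneg _

theorem integral_sq_le_gradSq (u : Fin 3 → 𝓢(E3, ℝ)) (k j : Fin 3) :
    ∫ x, spd k (u j) x ^ 2 ≤ gradSq u :=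
  single_le_sum_sum (f := fun k j => ∫ x, spd k (u j) x ^ 2)
    (fun _ _ => integral_nonneg fun _ => sq_nonneg _) k j

theorem sum_integral_sq_le_hessSq (u : Fin 3 → 𝓢(E3, ℝ)) (k j : Fin 3) :
    ∑ l, ∫ x, spd l (spd k (u j)) x ^ 2 ≤ hessSq u :=
  single_le_sum_sum (f := fun k j => ∑ l, ∫ x, spd l (spd k (u j)) x ^ 2)
    (fun _ _ => Finset.sum_nonneg fun _ _ => integral_nonneg fun _ => sq_nonneg _) k j

theorem norm_le_of_eLpNorm_top_le {f : E3 → ℂ} (hf : Continuous f) {B : ℝ} (hB : 0 ≤ B)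
    (h : eLpNorm f ⊤ volume ≤ ENNReal.ofReal B) (x : E3) : ‖f x‖ ≤ B := by
  have h1 : ∀ᵐ y ∂(volume : Measure E3), f y ∈ {z : ℂ | ‖z‖ ≤ B} := by
    filter_upwards [ae_le_eLpNormEssSup (f := f) (μ := (volume : Measure E3))] with y hy
    rw [eLpNorm_exponent_top] at h
    have := hy.trans h
    rwa [← ofReal_norm, ENNReal.ofReal_le_ofReal_iff hB] at this
  have h2 : Dense {y | ‖f y‖ ≤ B} := Measure.dense_of_ae h1
  have h3 : IsClosed {y | ‖f y‖ ≤ B} := isClosed_le hf.norm continuous_const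
  have := h2.closure_eq
  rw [h3.closure_eq] at this
  exact Set.eq_univ_iff_forall.1 this x

theorem blockBound_cx_of_vecBesovInf_le {χ : E3 → ℝ} (hχ : IsLPCutoff χ) {α A : ℝ} (hA : 0 ≤ A)
    {v : Fin 3 → E3 → ℝ} (h : vecBesovInf χ (-α) v ≤ ENNReal.ofReal A) (i : Fin 3)
    (f : 𝓢(E3, ℝ)) (hf : v i = ⇑f) : BlockBound χ α A (cx f) := by
  intro j x
  rw [← _root_.sub_apply]
  refine norm_le_of_eLpNorm_top_le (SchwartzMap.continuous _) (by positivity) ?_ x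
  rw [lowPass_succ_sub_eq_Dproj hχ]
  have h1 := (le_iSup₂ (f := fun (i : Fin 3) (j : ℤ) => (2 : ℝ≥0∞) ^ ((j : ℝ) * (-α)) *
    eLpNorm (Dproj χ j fun x => ((v i x : ℝ) : ℂ)) ⊤ volume) i j).trans h
  have h2 : (fun x => ((v i x : ℝ) : ℂ)) = ⇑(cx f) := by rw [hf]; rfl
  simp only [h2, mul_neg] at h1
  rw [ENNReal.rpow_neg, mul_comm, ← div_eq_mul_inv, ENNReal.div_le_iff] at h1
  · refine h1.trans_eq ?_
    rw [ENNReal.ofReal_mul hA, ← ENNReal.ofReal_rpow_of_pos two_pos]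
    norm_num
  · exact (ENNReal.rpow_pos two_pos (by norm_num)).ne'
  · exact ENNReal.rpow_ne_top_of_ne_zero (by norm_num) (by norm_num)

theorem BlockBound.neg {χ : E3 → ℝ} {α A : ℝ} {f : 𝓢(E3, ℂ)} (h : BlockBound χ α A f) :
    BlockBound χ α A (-f) := by
  intro j x
  have := h j x
  rw [← norm_neg] at this
  simpa [sub_eq_add_neg, add_comm] using this

theorem blockBound_curl {χ : E3 → ℝ} (hχ : IsLPCutoff χ) {α A : ℝ} (hA : 0 ≤ A)
    {u : Fin 3 → 𝓢(E3, ℝ)} (h : vecBesovInf χ (-α) (curlS u) ≤ ENNReal.ofReal A) (a b : Fin 3) :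
    BlockBound χ α A (spd a (cx (u b)) - spd b (cx (u a))) := by
  have key : ∀ a b i, (curlS u i = ⇑(spd a (u b) - spd b (u a))) →
      BlockBound χ α A (spd a (cx (u b)) - spd b (cx (u a))) := by
    intro a b i hi
    have := blockBound_cx_of_vecBesovInf_le hχ hA h i _ hi
    rw [spd_cx, spd_cx]
    convert this using 1
    exact (map_sub (SchwartzMap.postcompCLM (E := E3) Complex.ofRealCLM) _ _).symm
  have k0 := key 1 2 0 (by ext x; simp [curlS, curl3, pd_coe])
  have k1 := key 2 0 1 (by ext x; simp [curlS, curl3, pd_coe])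
  have k2 := key 0 1 2 (by ext x; simp [curlS, curl3, pd_coe])
  have hz : BlockBound χ α A 0 := by
    intro j x
    simp only [map_zero, sub_self, norm_zero]
    positivity
  have n0 := k0.neg
  have n1 := k1.neg
  have n2 := k2.neg
  rw [neg_sub] at n0 n1 n2
  fin_cases a <;> fin_cases b <;> simp only [sub_self, Fin.zero_eta, Fin.mk_one, Fin.reduceFinMk] <;> assumption

theorem exists_abs_stretchForm_le {χ : E3 → ℝ} (hχ : IsLPCutoff χ) {α : ℝ} (hα : 0 < α)
    (hα2 : α < 2) : ∃ C : ℝ, 0 ≤ C ∧ ∀ (u : Fin 3 → 𝓢(E3, ℝ)) (A : ℝ) (N : ℤ), 0 ≤ A →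
      ∑ i, spd i (u i) = 0 → vecBesovInf χ (-α) (curlS u) ≤ ENNReal.ofReal A →
      |stretchForm u| ≤
        C * A * (2 ^ ((N : ℝ) * α) * gradSq u + 2 ^ ((N : ℝ) * (α - 2)) * hessSq u) := by
  obtain ⟨C₁, hC₁, h₁⟩ := exists_norm_integral_mul_mul_le hχ hα hα2
  obtain ⟨C₂, hC₂, h₂⟩ := exists_blockBound_spd hχ hα
  refine ⟨27 * C₁ * C₂, by positivity, ?_⟩
  intro u A N hA hdiv hB
  have hb := h₂ (fun i => cx (u i)) A hA (by
    simp_rw [spd_cx]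
    have := map_sum (SchwartzMap.postcompCLM (E := E3) Complex.ofRealCLM)
      (fun i => spd i (u i)) Finset.univ
    rw [hdiv, map_zero] at this
    exact this.symm) (blockBound_curl hχ hA hB)
  have hE : ∀ k j, l2sq (spd k (cx (u j))) ≤ gradSq u := by
    intro k j
    rw [spd_cx, l2sq_cx]
    exact integral_sq_le_gradSq u k j
  have hD : ∀ k j, ∑ l, l2sq (spd l (spd k (cx (u j)))) ≤ hessSq u := by
    intro k j
    simp_rw [spd_cx, l2sq_cx]
    exact sum_integral_sq_le_hessSq u k j
  set R := 2 ^ ((N : ℝ) * α) * gradSq u + 2 ^ ((N : ℝ) * (α - 2)) * hessSq u with hR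
  have ht : ∀ k j i, |∫ x, spd k (u j) x * spd k (u i) x * spd i (u j) x|
      ≤ C₁ * (C₂ * A) * R := by
    intro k j i
    have := h₁ _ _ _ (C₂ * A) (gradSq u) (hessSq u) N (by positivity) (hb k j) (hb k i) (hb i j)
      (hE k j) (hE k i) (hE i j) (hD k j) (hD k i) (hD i j)
    refine le_trans (le_of_eq ?_) this
    simp_rw [spd_cx, cx_apply, ← Complex.ofReal_mul]
    rw [integral_complex_ofReal, Complex.norm_real, Real.norm_eq_abs]
  calc |stretchForm u| ≤ ∑ k : Fin 3, ∑ j : Fin 3, ∑ i : Fin 3, C₁ * (C₂ * A) * R := by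
        refine (Finset.abs_sum_le_sum_abs _ _).trans (Finset.sum_le_sum fun k _ => ?_)
        refine (Finset.abs_sum_le_sum_abs _ _).trans (Finset.sum_le_sum fun j _ => ?_)
        exact (Finset.abs_sum_le_sum_abs _ _).trans (Finset.sum_le_sum fun i _ => ht k j i)
    _ = _ := by
        simp only [Finset.sum_const, Finset.card_univ, Fintype.card_fin, nsmul_eq_mul]
        push_cast
        ring

theorem exists_int_two_rpow_le {α X : ℝ} (hα : 0 < α) (hα2 : α < 2) (hX : 0 < X) :
    ∃ N : ℤ, X * 2 ^ ((N : ℝ) * (α - 2)) ≤ 1 ∧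
      X * 2 ^ ((N : ℝ) * α) ≤ 2 ^ α * X ^ (2 / (2 - α)) := by
  have h2 : 0 < 2 - α := by linarith
  obtain ⟨n, hn1, hn2⟩ := exists_mem_Ioc_zpow (x := X ^ (1 / (2 - α))) (y := (2 : ℝ))
    (by positivity) one_lt_two
  rw [← Real.rpow_intCast] at hn1 hn2
  refine ⟨n + 1, ?_, ?_⟩
  · have h3 : X ≤ 2 ^ (((n + 1 : ℤ) : ℝ) * (2 - α)) := by
      have := Real.rpow_le_rpow (by positivity) hn2 h2.le
      rwa [← Real.rpow_mul hX.le, ← Real.rpow_mul two_pos.le, one_div, inv_mul_cancel₀ h2.ne',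
        Real.rpow_one] at this
    have h4 : (2 : ℝ) ^ (((n + 1 : ℤ) : ℝ) * (α - 2)) = (2 ^ (((n + 1 : ℤ) : ℝ) * (2 - α)))⁻¹ := by
      rw [← Real.rpow_neg two_pos.le]
      congr 1
      ring
    rw [h4, ← div_eq_mul_inv]
    exact div_le_one_of_le₀ h3 (by positivity)
  · have h5 : (2 : ℝ) ^ (((n + 1 : ℤ) : ℝ) * α) ≤ 2 ^ α * X ^ (α / (2 - α)) := by
      have := Real.rpow_le_rpow (by positivity) hn1.le hα.le
      rw [← Real.rpow_mul hX.le, ← Real.rpow_mul two_pos.le] at this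
      rw [show ((n + 1 : ℤ) : ℝ) * α = α + n * α by push_cast; ring, Real.rpow_add two_pos,
        show α / (2 - α) = 1 / (2 - α) * α by ring]
      gcongr
    calc X * 2 ^ (((n + 1 : ℤ) : ℝ) * α) ≤ X * (2 ^ α * X ^ (α / (2 - α))) := by gcongr
      _ = 2 ^ α * (X ^ (1 : ℝ) * X ^ (α / (2 - α))) := by rw [Real.rpow_one]; ring
      _ = _ := by
        rw [← Real.rpow_add hX]
        congr 2
        field_simp
        ring

theorem exists_abs_stretchForm_le_rpow {χ : E3 → ℝ} (hχ : IsLPCutoff χ) {α : ℝ} (hα : 0 < α)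
    (hα2 : α < 2) : ∃ K : ℝ, 0 ≤ K ∧ ∀ (u : Fin 3 → 𝓢(E3, ℝ)), ∑ i, spd i (u i) = 0 →
      vecBesovInf χ (-α) (curlS u) ≠ ∞ →
      |stretchForm u| ≤
        K * (vecBesovInf χ (-α) (curlS u)).toReal ^ (2 / (2 - α)) * gradSq u + hessSq u := by
  obtain ⟨C, hC, h⟩ := exists_abs_stretchForm_le hχ hα hα2
  refine ⟨2 ^ α * C ^ (2 / (2 - α)), by positivity, ?_⟩
  intro u hdiv hfin
  set A := (vecBesovInf χ (-α) (curlS u)).toReal with hA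
  have hA0 : 0 ≤ A := ENNReal.toReal_nonneg
  have hN := fun N => h u A N hA0 hdiv (by rw [hA, ENNReal.ofReal_toReal hfin])
  have hE := gradSq_nonneg u
  have hD := hessSq_nonneg u
  rcases (mul_nonneg hC hA0).eq_or_lt with h0 | hpos
  · have := hN 0
    rw [← h0, zero_mul] at this
    exact this.trans (by positivity)
  · obtain ⟨N, h1, h2⟩ := exists_int_two_rpow_le hα hα2 hpos
    rw [Real.mul_rpow hC hA0] at h2
    calc |stretchForm u| ≤ _ := hN N
      _ = C * A * 2 ^ ((N : ℝ) * α) * gradSq u + C * A * 2 ^ ((N : ℝ) * (α - 2)) * hessSq u := by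
        ring
      _ ≤ 2 ^ α * (C ^ (2 / (2 - α)) * A ^ (2 / (2 - α))) * gradSq u + 1 * hessSq u := by
        gcongr
      _ = _ := by ring

theorem spd_comm (i k : Fin 3) (f : 𝓢(E3, ℝ)) : spd i (spd k f) = spd k (spd i f) := by
  have hd : Differentiable ℝ (fderiv ℝ f) :=
    ((f.smooth 2).fderiv_right (m := 1) (by norm_num)).differentiable (by norm_num)
  have key : ∀ (a b : Fin 3) (x : E3), spd a (spd b f) x
      = fderiv ℝ (fderiv ℝ f) x (EuclideanSpace.single a 1) (EuclideanSpace.single b 1) := by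
    intro a b x
    rw [spd_apply, show ⇑(spd b f) = fun y => fderiv ℝ f y (EuclideanSpace.single b 1) from
      funext fun y => spd_apply b f y, fderiv_clm_apply (hd x) (differentiableAt_const _)]
    simp
  ext x
  rw [key, key]
  exact ((f.smooth 2).contDiffAt.isSymmSndFDerivAt (by simp)) _ _

/-- The pointwise product of two Schwartz functions. -/
def sprod (f g : 𝓢(E3, ℝ)) : 𝓢(E3, ℝ) := SchwartzMap.smulLeftCLM ℝ ⇑f g

theorem sprod_apply (f g : 𝓢(E3, ℝ)) (x : E3) : sprod f g x = f x * g x := by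
  rw [sprod, SchwartzMap.smulLeftCLM_apply_apply f.hasTemperateGrowth, smul_eq_mul]

theorem spd_sprod (k : Fin 3) (f g : 𝓢(E3, ℝ)) (x : E3) :
    spd k (sprod f g) x = f x * spd k g x + spd k f x * g x := by
  rw [spd_apply, show ⇑(sprod f g) = fun y => f y * g y from funext fun y => sprod_apply f g y,
    fderiv_fun_mul f.differentiableAt g.differentiableAt, spd_apply, spd_apply]
  simp [mul_comm]

theorem integral_mul_spd (f g : 𝓢(E3, ℝ)) (k : Fin 3) :
    ∫ x, f x * spd k g x = -∫ x, spd k f x * g x :=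
  SchwartzMap.integral_mul_lineDerivOp_right_eq_neg_left f g _

theorem integral_spd_mul_spd_laplacian (f : 𝓢(E3, ℝ)) (k i : Fin 3) :
    ∫ x, spd k f x * spd k (spd i (spd i f)) x = -∫ x, spd i (spd k f) x ^ 2 := by
  rw [spd_comm k i, spd_comm k i, integral_mul_spd]
  simp only [sq]

theorem integral_transport (f v : 𝓢(E3, ℝ)) (i : Fin 3) :
    2 * ∫ x, f x * (v x * spd i f x) = -∫ x, f x * f x * spd i v x := by
  have h := integral_mul_spd (sprod f v) f i
  simp_rw [spd_sprod, sprod_apply] at h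
  have e : ∀ x, (f x * spd i v x + spd i f x * v x) * f x
      = f x * f x * spd i v x + f x * v x * spd i f x := fun x => by ring
  simp_rw [e] at h
  rw [integral_add (integrable_schwartz_mul_mul _ _ _) (integrable_schwartz_mul_mul _ _ _)] at h
  simp_rw [← mul_assoc]
  linarith

theorem sum_integral_transport {u : Fin 3 → 𝓢(E3, ℝ)} (hdiv : ∑ i, spd i (u i) = 0)
    (f : 𝓢(E3, ℝ)) : ∑ i, ∫ x, f x * (u i x * spd i f x) = 0 := by
  have h : 2 * ∑ i, ∫ x, f x * (u i x * spd i f x) = 0 := by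
    rw [Finset.mul_sum]
    simp_rw [integral_transport]
    rw [Finset.sum_neg_distrib, ← integral_finsetSum _
      fun i _ => integrable_schwartz_mul_mul f f (spd i (u i))]
    simp_rw [← Finset.mul_sum, ← _root_.sum_apply, hdiv]
    simp
  linarith

theorem spd_sum (k : Fin 3) (f : Fin 3 → 𝓢(E3, ℝ)) : spd k (∑ i, f i) = ∑ i, spd k (f i) := by
  ext x
  rw [_root_.sum_apply, spd_apply, show ⇑(∑ i, f i) = fun y => ∑ i, f i y from
    funext fun y => _root_.sum_apply _ _ _, fderiv_fun_sum fun i _ => (f i).differentiableAt]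
  simp [spd_apply]

theorem spd_sub (k : Fin 3) (f g : 𝓢(E3, ℝ)) : spd k (f - g) = spd k f - spd k g := by
  ext x
  rw [_root_.sub_apply, spd_apply, spd_apply, spd_apply, show ⇑(f - g) = fun y => f y - g y from rfl,
    fderiv_fun_sub f.differentiableAt g.differentiableAt]
  simp

theorem sum_integral_spd_mul_spd_pressure {u : Fin 3 → 𝓢(E3, ℝ)} (hdiv : ∑ i, spd i (u i) = 0)
    (p : 𝓢(E3, ℝ)) (k : Fin 3) : ∑ j, ∫ x, spd k (u j) x * spd k (spd j p) x = 0 := by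
  have h : ∀ j, ∫ x, spd k (u j) x * spd k (spd j p) x = -∫ x, spd j (spd k (u j)) x * spd k p x :=
    fun j => by rw [spd_comm k j p, integral_mul_spd]
  simp_rw [h]
  rw [Finset.sum_neg_distrib, ← integral_finsetSum _ fun i _ => integrable_schwartz_mul _ _]
  simp_rw [← Finset.sum_mul, ← _root_.sum_apply, spd_comm _ k, ← spd_sum, hdiv]
  simp [spd_apply]

/-- The right-hand side `Δu - (u·∇)u - ∇p` of the Navier–Stokes equations. -/
def nsRhs (u : Fin 3 → 𝓢(E3, ℝ)) (p : 𝓢(E3, ℝ)) (j : Fin 3) : 𝓢(E3, ℝ) :=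
  ∑ i, spd i (spd i (u j)) - ∑ i, sprod (u i) (spd i (u j)) - spd j p

theorem integral_spd_mul_spd_nsRhs (u : Fin 3 → 𝓢(E3, ℝ)) (p : 𝓢(E3, ℝ)) (k j : Fin 3) :
    ∫ x, spd k (u j) x * spd k (nsRhs u p j) x
      = -(∑ l, ∫ x, spd l (spd k (u j)) x ^ 2)
        - (∑ i, ∫ x, spd k (u j) x * (u i x * spd i (spd k (u j)) x))
        - (∑ i, ∫ x, spd k (u j) x * spd k (u i) x * spd i (u j) x)
        - ∫ x, spd k (u j) x * spd k (spd j p) x := by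
  have e : ∀ x, spd k (u j) x * spd k (nsRhs u p j) x
      = ∑ i, (spd k (u j) x * spd k (spd i (spd i (u j))) x
        - spd k (u j) x * (u i x * spd i (spd k (u j)) x)
        - spd k (u j) x * spd k (u i) x * spd i (u j) x)
        - spd k (u j) x * spd k (spd j p) x := by
    intro x
    rw [nsRhs, spd_sub, spd_sub, spd_sum, spd_sum, _root_.sub_apply, _root_.sub_apply,
      _root_.sum_apply, _root_.sum_apply]
    simp_rw [spd_sprod, spd_comm _ k (u j)]
    simp only [Fin.sum_univ_three]
    ring
  have i1 : ∀ i, Integrable fun x => spd k (u j) x * spd k (spd i (spd i (u j))) x :=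
    fun i => integrable_schwartz_mul _ _
  have i2 : ∀ i, Integrable fun x => spd k (u j) x * (u i x * spd i (spd k (u j)) x) := by
    intro i
    simp_rw [← mul_assoc]
    exact integrable_schwartz_mul_mul _ _ _
  have i3 : ∀ i, Integrable fun x => spd k (u j) x * spd k (u i) x * spd i (u j) x :=
    fun i => integrable_schwartz_mul_mul _ _ _
  have i4 : ∀ i, Integrable fun x => spd k (u j) x * spd k (spd i (spd i (u j))) x
        - spd k (u j) x * (u i x * spd i (spd k (u j)) x)
        - spd k (u j) x * spd k (u i) x * spd i (u j) x :=
    fun i => ((i1 i).sub (i2 i)).sub (i3 i)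
  have i5 : ∀ i, Integrable fun x => spd k (u j) x * spd k (spd i (spd i (u j))) x
        - spd k (u j) x * (u i x * spd i (spd k (u j)) x) := fun i => (i1 i).sub (i2 i)
  simp_rw [e]
  rw [integral_sub (integrable_finsetSum _ fun i _ => i4 i)
    (integrable_schwartz_mul _ _), integral_finsetSum _ fun i _ => i4 i]
  congr 1
  rw [← Finset.sum_neg_distrib, ← Finset.sum_sub_distrib, ← Finset.sum_sub_distrib]
  refine Finset.sum_congr rfl fun i _ => ?_
  rw [integral_sub (i5 i) (i3 i), integral_sub (i1 i) (i2 i),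
    integral_spd_mul_spd_laplacian]

theorem sum_integral_spd_mul_spd_nsRhs {u : Fin 3 → 𝓢(E3, ℝ)} (hdiv : ∑ i, spd i (u i) = 0)
    (p : 𝓢(E3, ℝ)) :
    ∑ k, ∑ j, ∫ x, spd k (u j) x * spd k (nsRhs u p j) x = -hessSq u - stretchForm u := by
  simp_rw [integral_spd_mul_spd_nsRhs, sum_integral_transport hdiv, Finset.sum_sub_distrib,
    sum_integral_spd_mul_spd_pressure hdiv, Finset.sum_neg_distrib]
  simp [hessSq, stretchForm]

theorem hasDerivAt_fderiv_slice {U : ℝ × E3 → ℝ} {t : ℝ} {x : E3}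
    (hU : ∀ᶠ q in nhds (t, x), ContDiffAt ℝ 2 U q) (e : E3) :
    HasDerivAt (fun s => fderiv ℝ (fun y => U (s, y)) x e)
      (fderiv ℝ (fun y => deriv (fun s => U (s, y)) t) x e) t := by
  have hUt : ContDiffAt ℝ 2 U (t, x) := hU.self_of_nhds
  have hd : DifferentiableAt ℝ (fderiv ℝ U) (t, x) :=
    (hUt.fderiv_right (m := 1) (by norm_num)).differentiableAt (by norm_num)
  have h1 : (fun s => fderiv ℝ (fun y => U (s, y)) x e) =ᶠ[nhds t]
      fun s => fderiv ℝ U (s, x) (0, e) := by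
    have : Tendsto (fun s : ℝ => (s, x)) (nhds t) (nhds (t, x)) :=
      (Continuous.prodMk_left x).tendsto t
    filter_upwards [this.eventually hU] with s hs
    have h2 := (hs.differentiableAt (by norm_num)).hasFDerivAt.comp x (hasFDerivAt_prodMk_right s x)
    change fderiv ℝ (U ∘ Prod.mk s) x e = _
    rw [h2.fderiv]
    simp
  have h3 : (fun y => deriv (fun s => U (s, y)) t) =ᶠ[nhds x]
      fun y => fderiv ℝ U (t, y) (1, 0) := by
    have : Tendsto (fun y : E3 => (t, y)) (nhds x) (nhds (t, x)) :=
      (Continuous.prodMk_right t).tendsto x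
    filter_upwards [this.eventually hU] with y hy
    have h2 := (hy.differentiableAt (by norm_num)).hasFDerivAt.comp_hasDerivAt t
      ((hasFDerivAt_prodMk_left t y).hasDerivAt)
    change deriv (U ∘ fun s => (s, y)) t = _
    rw [h2.deriv]
    simp
  have h4 : HasDerivAt (fun s => fderiv ℝ U (s, x) (0, e))
      (fderiv ℝ (fderiv ℝ U) (t, x) (1, 0) (0, e)) t := by
    have h5 := hd.hasFDerivAt.comp_hasDerivAt t ((hasFDerivAt_prodMk_left t x).hasDerivAt)
    simpa using h5.clm_apply (hasDerivAt_const t ((0 : ℝ), e))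
  have h6 : fderiv ℝ (fun y => fderiv ℝ U (t, y) (1, 0)) x e
      = fderiv ℝ (fderiv ℝ U) (t, x) (0, e) (1, 0) := by
    have h7 := hd.hasFDerivAt.comp x (hasFDerivAt_prodMk_right t x)
    have h8 := h7.clm_apply (hasFDerivAt_const ((1 : ℝ), (0 : E3)) x)
    change fderiv ℝ (fun y => (fderiv ℝ U ∘ Prod.mk t) y (1, 0)) x e = _
    rw [h8.fderiv]
    simp
  rw [h3.fderiv_eq, h6, (hUt.isSymmSndFDerivAt (by simp)) (0, e) (1, 0)]
  exact h4.congr_of_eventuallyEq h1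

theorem norm_single_one (i : Fin 3) : ‖(EuclideanSpace.single i 1 : E3)‖ = 1 := by simp

theorem seminorm_spd_le (k l : ℕ) (i : Fin 3) (f : 𝓢(E3, ℝ)) :
    SchwartzMap.seminorm ℝ k l (spd i f) ≤ SchwartzMap.seminorm ℝ k (l + 1) f := by
  refine SchwartzMap.seminorm_le_bound ℝ k l _ (apply_nonneg _ _) fun x => ?_
  refine le_trans ?_ (f.le_seminorm ℝ k (l + 1) x)
  gcongr
  set L := ContinuousLinearMap.apply ℝ ℝ (EuclideanSpace.single i 1 : E3) with hL
  have e : ⇑(spd i f) = ⇑L ∘ fderiv ℝ f := funext fun y => spd_apply i f y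
  have hc : ContDiff ℝ l (fderiv ℝ f) := (f.smooth (l + 1)).fderiv_right (by norm_cast)
  rw [e, ← norm_iteratedFDeriv_fderiv]
  refine (L.norm_iteratedFDeriv_comp_left hc.contDiffAt le_rfl).trans ?_
  refine mul_le_of_le_one_left (norm_nonneg _) (L.opNorm_le_bound zero_le_one fun w => ?_)
  rw [hL, ContinuousLinearMap.apply_apply, one_mul]
  exact (w.le_opNorm _).trans_eq (by rw [norm_single_one, mul_one])

/-- All Schwartz seminorms of the family `f` are bounded near the time `t`. -/
def LocSchwartzBdd (f : ℝ → 𝓢(E3, ℝ)) (t : ℝ) : Prop :=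
  ∀ k l : ℕ, ∃ M : ℝ, ∀ᶠ s in nhds t, SchwartzMap.seminorm ℝ k l (f s) ≤ M

theorem LocSchwartzBdd.spd {f : ℝ → 𝓢(E3, ℝ)} {t : ℝ} (h : LocSchwartzBdd f t) (i : Fin 3) :
    LocSchwartzBdd (fun s => spd i (f s)) t := fun k l =>
  (h k (l + 1)).imp fun _ hM => hM.mono fun s hs => (seminorm_spd_le k l i (f s)).trans hs

/-- The family of functions `f` is uniformly bounded near the time `t`. -/
def LocUnifBdd (f : ℝ → E3 → ℝ) (t : ℝ) : Prop :=
  ∃ M : ℝ, ∀ᶠ s in nhds t, ∀ x, |f s x| ≤ M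

theorem LocSchwartzBdd.locUnifBdd {f : ℝ → 𝓢(E3, ℝ)} {t : ℝ} (h : LocSchwartzBdd f t) :
    LocUnifBdd (fun s => ⇑(f s)) t :=
  (h 0 0).imp fun _ hM => hM.mono fun s hs x =>
    (SchwartzMap.norm_le_seminorm ℝ (f s) x).trans hs

theorem LocUnifBdd.add {f g : ℝ → E3 → ℝ} {t : ℝ} (hf : LocUnifBdd f t) (hg : LocUnifBdd g t) :
    LocUnifBdd (fun s x => f s x + g s x) t := by
  obtain ⟨M, hM⟩ := hf
  obtain ⟨L, hL⟩ := hg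
  refine ⟨M + L, ?_⟩
  filter_upwards [hM, hL] with s h1 h2 x
  exact (abs_add_le _ _).trans (add_le_add (h1 x) (h2 x))

theorem LocUnifBdd.sub {f g : ℝ → E3 → ℝ} {t : ℝ} (hf : LocUnifBdd f t) (hg : LocUnifBdd g t) :
    LocUnifBdd (fun s x => f s x - g s x) t := by
  obtain ⟨M, hM⟩ := hf
  obtain ⟨L, hL⟩ := hg
  refine ⟨M + L, ?_⟩
  filter_upwards [hM, hL] with s h1 h2 x
  exact (abs_sub _ _).trans (add_le_add (h1 x) (h2 x))

theorem LocUnifBdd.mul {f g : ℝ → E3 → ℝ} {t : ℝ} (hf : LocUnifBdd f t) (hg : LocUnifBdd g t) :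
    LocUnifBdd (fun s x => f s x * g s x) t := by
  obtain ⟨M, hM⟩ := hf
  obtain ⟨L, hL⟩ := hg
  refine ⟨M * L, ?_⟩
  filter_upwards [hM, hL] with s h1 h2 x
  rw [abs_mul]
  exact mul_le_mul (h1 x) (h2 x) (abs_nonneg _) ((abs_nonneg _).trans (h1 x))

theorem LocUnifBdd.sum {f : Fin 3 → ℝ → E3 → ℝ} {t : ℝ} (hf : ∀ i, LocUnifBdd (f i) t) :
    LocUnifBdd (fun s x => ∑ i, f i s x) t := by
  simp only [Fin.sum_univ_three]
  exact ((hf 0).add (hf 1)).add (hf 2)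

theorem LocSchwartzBdd.exists_decay {f : ℝ → 𝓢(E3, ℝ)} {t : ℝ} (h : LocSchwartzBdd f t) :
    ∃ M : ℝ, ∀ᶠ s in nhds t, ∀ x, |f s x| ≤ M * (1 + ‖x‖) ^ (-(4 : ℝ)) := by
  obtain ⟨M, hM⟩ := h 0 0
  obtain ⟨L, hL⟩ := h 4 0
  refine ⟨8 * (M + L), ?_⟩
  filter_upwards [hM, hL] with s h1 h2 x
  have h3 := (SchwartzMap.norm_le_seminorm ℝ (f s) x).trans h1
  have h4 := (SchwartzMap.norm_pow_mul_le_seminorm ℝ (f s) 4 x).trans h2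
  rw [Real.norm_eq_abs] at h3 h4
  have h5 : (1 + ‖x‖) ^ 4 ≤ 8 * (1 + ‖x‖ ^ 4) := by
    have := add_pow_le zero_le_one (norm_nonneg x) 4
    norm_num at this ⊢
    exact this
  have hp : (0 : ℝ) < 1 + ‖x‖ := by positivity
  rw [Real.rpow_neg hp.le, ← div_eq_mul_inv, le_div_iff₀ (by positivity)]
  norm_cast
  calc |f s x| * (1 + ‖x‖) ^ 4 ≤ |f s x| * (8 * (1 + ‖x‖ ^ 4)) := by gcongr
    _ = 8 * (|f s x| + ‖x‖ ^ 4 * |f s x|) := by ring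
    _ ≤ _ := by gcongr

section StrongSolution

variable {T : ℝ} {u : ℝ → Fin 3 → 𝓢(E3, ℝ)} {p : ℝ → 𝓢(E3, ℝ)}

theorem IsStrongSolution.locSchwartzBdd_u (h : IsStrongSolution T u p) {t : ℝ}
    (ht : t ∈ Set.Ioo 0 T) (j : Fin 3) : LocSchwartzBdd (fun s => u s j) t := by
  intro k l
  obtain ⟨ε, hε, M, hM⟩ := h.locBdd_u k l t ⟨ht.1.le, ht.2⟩
  refine ⟨M, ?_⟩
  filter_upwards [Ioo_mem_nhds ht.1 ht.2, Metric.ball_mem_nhds t hε] with s hs hs2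
  exact hM s ⟨hs.1.le, hs.2⟩ hs2 j

theorem IsStrongSolution.locSchwartzBdd_p (h : IsStrongSolution T u p) {t : ℝ}
    (ht : t ∈ Set.Ioo 0 T) : LocSchwartzBdd p t := by
  intro k l
  obtain ⟨ε, hε, M, hM⟩ := h.locBdd_p k l t ⟨ht.1.le, ht.2⟩
  refine ⟨M, ?_⟩
  filter_upwards [Ioo_mem_nhds ht.1 ht.2, Metric.ball_mem_nhds t hε] with s hs hs2
  exact hM s ⟨hs.1.le, hs.2⟩ hs2

theorem spd_nsRhs_apply (u : Fin 3 → 𝓢(E3, ℝ)) (p : 𝓢(E3, ℝ)) (k j : Fin 3) (x : E3) :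
    spd k (nsRhs u p j) x = ∑ i, spd k (spd i (spd i (u j))) x
      - ∑ i, (u i x * spd k (spd i (u j)) x + spd k (u i) x * spd i (u j) x)
      - spd k (spd j p) x := by
  rw [nsRhs, spd_sub, spd_sub, spd_sum, spd_sum, _root_.sub_apply, _root_.sub_apply,
    _root_.sum_apply, _root_.sum_apply]
  simp_rw [spd_sprod]

theorem IsStrongSolution.locUnifBdd_spd_nsRhs (h : IsStrongSolution T u p) {t : ℝ}
    (ht : t ∈ Set.Ioo 0 T) (k j : Fin 3) :
    LocUnifBdd (fun s => ⇑(spd k (nsRhs (u s) (p s) j))) t := by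
  have hu := h.locSchwartzBdd_u ht
  have hp := h.locSchwartzBdd_p ht
  have e : (fun s => ⇑(spd k (nsRhs (u s) (p s) j))) = _ :=
    funext fun s => funext fun x => spd_nsRhs_apply (u s) (p s) k j x
  rw [e]
  refine LocUnifBdd.sub (LocUnifBdd.sub (LocUnifBdd.sum fun i => ?_) (LocUnifBdd.sum fun i => ?_))
    ?_
  · exact ((((hu j).spd i).spd i).spd k).locUnifBdd
  · exact ((hu i).locUnifBdd.mul (((hu j).spd i).spd k).locUnifBdd).add
      (((hu i).spd k).locUnifBdd.mul ((hu j).spd i).locUnifBdd)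
  · exact ((hp.spd j).spd k).locUnifBdd

theorem IsStrongSolution.hasDerivAt_spd (h : IsStrongSolution T u p) {t : ℝ}
    (ht : t ∈ Set.Ioo 0 T) (k j : Fin 3) (x : E3) :
    HasDerivAt (fun s => spd k (u s j) x) (spd k (nsRhs (u t) (p t) j) x) t := by
  have hopen : IsOpen (Set.Ioo 0 T ×ˢ (Set.univ : Set E3)) := isOpen_Ioo.prod isOpen_univ
  have hU : ∀ᶠ q in nhds (t, x), ContDiffAt ℝ 2 (fun tx : ℝ × E3 => u tx.1 j tx.2) q := by
    filter_upwards [hopen.mem_nhds ⟨ht, Set.mem_univ x⟩] with q hq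
    refine (((h.smooth_u j).mono (Set.prod_mono_left Set.Ioo_subset_Ico_self)).contDiffAt
      (hopen.mem_nhds hq)).of_le ?_
    exact WithTop.coe_le_coe.2 (le_top : (2 : ℕ∞) ≤ ⊤)
  have h1 := hasDerivAt_fderiv_slice hU (EuclideanSpace.single k 1)
  have h2 : (fun y => deriv (fun s => u s j y) t) = ⇑(nsRhs (u t) (p t) j) := by
    ext y
    have h3 := h.eqn t ht y j
    simp_rw [pd_coe] at h3
    rw [nsRhs, _root_.sub_apply, _root_.sub_apply, _root_.sum_apply, _root_.sum_apply]
    simp_rw [sprod_apply]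
    linarith
  simp only [h2, ← spd_apply] at h1
  exact h1

theorem IsStrongSolution.hasDerivAt_integral_sq (h : IsStrongSolution T u p) {t : ℝ}
    (ht : t ∈ Set.Ioo 0 T) (k j : Fin 3) :
    HasDerivAt (fun s => ∫ x, spd k (u s j) x ^ 2)
      (∫ x, 2 * (spd k (u t j) x * spd k (nsRhs (u t) (p t) j) x)) t := by
  obtain ⟨M, hM⟩ := ((h.locSchwartzBdd_u ht j).spd k).exists_decay
  obtain ⟨L, hL⟩ := h.locUnifBdd_spd_nsRhs ht k j
  have hs := (hM.and hL).and (Ioo_mem_nhds ht.1 ht.2)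
  refine (hasDerivAt_integral_of_dominated_loc_of_deriv_le
    (F' := fun s x => 2 * (spd k (u s j) x * spd k (nsRhs (u s) (p s) j) x))
    (bound := fun x => 2 * (M * (1 + ‖x‖) ^ (-(4 : ℝ)) * L)) hs ?_ (integrable_sq _) ?_ ?_ ?_ ?_).2
  · exact Eventually.of_forall fun s => (integrable_sq _).aestronglyMeasurable
  · exact ((integrable_schwartz_mul _ _).const_mul 2).aestronglyMeasurable
  · refine Eventually.of_forall fun x s hs => ?_
    rw [norm_mul, norm_mul, Real.norm_two]
    have h1 := hs.1.1 x
    have h2 := hs.1.2 x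
    have h3 : 0 ≤ M * (1 + ‖x‖) ^ (-(4 : ℝ)) := (abs_nonneg _).trans h1
    rw [Real.norm_eq_abs, Real.norm_eq_abs]
    gcongr
  · refine (((integrable_one_add_norm ?_).const_mul M).mul_const L).const_mul 2
    rw [finrank_euclideanSpace_fin]
    norm_num
  · refine Eventually.of_forall fun x s hs => ?_
    have := (h.hasDerivAt_spd hs.2 k j x).fun_pow 2
    refine this.congr_deriv ?_
    norm_num
    ring

theorem IsStrongSolution.sum_spd_eq_zero (h : IsStrongSolution T u p) {t : ℝ}
    (ht : t ∈ Set.Ico 0 T) : ∑ i, spd i (u t i) = 0 := by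
  ext x
  have := h.divFree t ht x
  simp_rw [pd_coe] at this
  rw [_root_.sum_apply, this]
  rfl

theorem IsStrongSolution.hasDerivAt_gradSq (h : IsStrongSolution T u p) {t : ℝ}
    (ht : t ∈ Set.Ioo 0 T) :
    HasDerivAt (fun s => gradSq (u s)) (2 * (-hessSq (u t) - stretchForm (u t))) t := by
  rw [← sum_integral_spd_mul_spd_nsRhs (h.sum_spd_eq_zero ⟨ht.1.le, ht.2⟩) (p t)]
  simp_rw [Finset.mul_sum, ← integral_const_mul]
  exact HasDerivAt.fun_sum fun k _ => HasDerivAt.fun_sum fun j _ => h.hasDerivAt_integral_sq ht k j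

end StrongSolution

theorem eLpNorm_two_rpow_eq (f : 𝓢(E3, ℝ)) :
    eLpNorm (⇑f) 2 volume ^ (2 : ℝ) = ENNReal.ofReal (∫ x, f x ^ 2) := by
  rw [ofReal_integral_eq_lintegral_ofReal (integrable_sq f) (Eventually.of_forall fun _ =>
    sq_nonneg _)]
  rw [eLpNorm_eq_lintegral_rpow_enorm_toReal two_ne_zero ENNReal.ofNat_ne_top, ← ENNReal.rpow_mul]
  norm_num
  refine lintegral_congr fun x => ?_
  rw [← sq_abs, ENNReal.ofReal_pow (abs_nonneg _), ← Real.norm_eq_abs, ofReal_norm]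

theorem eLpNorm_curl_rpow_le (u : Fin 3 → 𝓢(E3, ℝ)) (i : Fin 3) :
    eLpNorm (curlS u i) 2 volume ^ (2 : ℝ) ≤ ENNReal.ofReal (4 * gradSq u) := by
  have key : ∀ a b, eLpNorm (⇑(spd a (u b) - spd b (u a))) 2 volume ^ (2 : ℝ)
      ≤ ENNReal.ofReal (4 * gradSq u) := by
    intro a b
    rw [eLpNorm_two_rpow_eq]
    refine ENNReal.ofReal_le_ofReal ?_
    have h1 := integral_sq_le_gradSq u a b
    have h2 := integral_sq_le_gradSq u b a
    have h3 : ∫ x, (spd a (u b) - spd b (u a)) x ^ 2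
        ≤ ∫ x, (2 * spd a (u b) x ^ 2 + 2 * spd b (u a) x ^ 2) := by
      refine integral_mono (integrable_sq _)
        (((integrable_sq _).const_mul 2).add ((integrable_sq _).const_mul 2)) fun x => ?_
      simp only [_root_.sub_apply]
      nlinarith [sq_nonneg (spd a (u b) x + spd b (u a) x)]
    rw [integral_add ((integrable_sq _).const_mul 2) ((integrable_sq _).const_mul 2),
      integral_const_mul, integral_const_mul] at h3
    linarith
  have c0 : curlS u 0 = ⇑(spd 1 (u 2) - spd 2 (u 1)) := by ext x; simp [curlS, curl3, pd_coe]
  have c1 : curlS u 1 = ⇑(spd 2 (u 0) - spd 0 (u 2)) := by ext x; simp [curlS, curl3, pd_coe]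
  have c2 : curlS u 2 = ⇑(spd 0 (u 1) - spd 1 (u 0)) := by ext x; simp [curlS, curl3, pd_coe]
  fin_cases i
  · exact c0 ▸ key 1 2
  · exact c1 ▸ key 2 0
  · exact c2 ▸ key 0 1

theorem vecL2_curl_le (u : Fin 3 → 𝓢(E3, ℝ)) :
    vecL2 (curlS u) ≤ (3 * ENNReal.ofReal (4 * gradSq u)) ^ (1 / 2 : ℝ) := by
  refine ENNReal.rpow_le_rpow ?_ (by norm_num)
  refine (Finset.sum_le_sum fun i _ => eLpNorm_curl_rpow_le u i).trans_eq ?_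
  simp

theorem le_of_hasDerivAt_of_lintegral_lt_top {f f' : ℝ → ℝ} {T : ℝ} (hT : 0 < T)
    {a : ℝ → ℝ≥0∞} (ha : ∫⁻ t in Set.Ioo 0 T, a t ≠ ∞)
    (hf : ∀ t ∈ Set.Ioo 0 T, HasDerivAt f (f' t) t)
    (hle : ∀ t ∈ Set.Ioo 0 T, ENNReal.ofReal (f' t) ≤ a t) :
    ∃ B : ℝ, ∀ t ∈ Set.Ico (T / 2) T, f t ≤ B := by
  set φ : ℝ → ℝ := fun t => max (deriv f t) 0 with hφ
  have hφm : Measurable φ := (measurable_deriv f).max measurable_const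
  have hφ0 : ∀ t, 0 ≤ φ t := fun t => le_max_right _ _
  have hint : IntegrableOn φ (Set.Ioo 0 T) := by
    refine ⟨hφm.aestronglyMeasurable, ?_⟩
    rw [hasFiniteIntegral_iff_ofReal (Eventually.of_forall hφ0)]
    refine lt_of_le_of_lt ?_ (lt_top_iff_ne_top.2 ha)
    refine setLIntegral_mono' measurableSet_Ioo fun t ht => ?_
    rw [hφ]
    simp only [ENNReal.ofReal_max, ENNReal.ofReal_zero, (hf t ht).deriv]
    exact max_le (hle t ht) bot_le
  refine ⟨f (T / 2) + ∫ t in Set.Ioo 0 T, φ t, fun t ht => ?_⟩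
  have hsub : Set.Icc (T / 2) t ⊆ Set.Ioo 0 T := fun s hs =>
    ⟨by linarith [hs.1], lt_of_le_of_lt hs.2 ht.2⟩
  have h1 := intervalIntegral.sub_le_integral_of_hasDeriv_right_of_le (g := f) (g' := f') (φ := φ)
    ht.1 (fun s hs => (hf s (hsub hs)).continuousAt.continuousWithinAt)
    (fun s hs => (hf s (hsub (Set.Ioo_subset_Icc_self hs))).hasDerivWithinAt)
    (hint.mono_set hsub)
    (fun s hs => by
      rw [← (hf s (hsub (Set.Ioo_subset_Icc_self hs))).deriv]
      exact le_max_left _ _)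
  rw [intervalIntegral.integral_of_le ht.1] at h1
  have h2 : ∫ s in Set.Ioc (T / 2) t, φ s ≤ ∫ s in Set.Ioo 0 T, φ s :=
    setIntegral_mono_set hint (Eventually.of_forall hφ0)
      (Set.Ioc_subset_Icc_self.trans hsub).eventuallyLE
  linarith

theorem IsStrongSolution.exists_gradSq_le {χ : E3 → ℝ} (hχ : IsLPCutoff χ) {α T : ℝ} (hα : 0 < α)
    (hα2 : α < 2) (hT : 0 < T) {u : ℝ → Fin 3 → 𝓢(E3, ℝ)} {p : ℝ → 𝓢(E3, ℝ)}
    (hsol : IsStrongSolution T u p)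
    (hfin : ∫⁻ τ in Set.Ioo 0 T, vecBesovInf χ (-α) (curlS (u τ)) ^ (2 / (2 - α)) ≠ ∞) :
    ∃ M : ℝ, ∀ t ∈ Set.Ico (T / 2) T, gradSq (u t) ≤ M := by
  obtain ⟨K, hK, hbound⟩ := exists_abs_stretchForm_le_rpow hχ hα hα2
  have hr : 0 < 2 / (2 - α) := div_pos two_pos (by linarith)
  have hE : ∀ t, 0 < gradSq (u t) + 1 := fun t => by linarith [gradSq_nonneg (u t)]
  have hle : ∀ t ∈ Set.Ioo 0 T,
      ENNReal.ofReal (2 * (-hessSq (u t) - stretchForm (u t)) / (gradSq (u t) + 1))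
        ≤ ENNReal.ofReal (2 * K + 1) * vecBesovInf χ (-α) (curlS (u t)) ^ (2 / (2 - α)) := by
    intro t ht
    by_cases htop : vecBesovInf χ (-α) (curlS (u t)) = ∞
    · rw [htop, ENNReal.top_rpow_of_pos hr,
        ENNReal.mul_top (ENNReal.ofReal_pos.2 (by linarith)).ne']
      exact le_top
    · set A := (vecBesovInf χ (-α) (curlS (u t))).toReal with hA
      have h1 := hbound (u t) (hsol.sum_spd_eq_zero ⟨ht.1.le, ht.2⟩) htop
      rw [← ENNReal.ofReal_toReal htop, ← hA,
        ENNReal.ofReal_rpow_of_nonneg ENNReal.toReal_nonneg hr.le,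
        ← ENNReal.ofReal_mul (by positivity)]
      refine ENNReal.ofReal_le_ofReal ?_
      rw [div_le_iff₀ (hE t)]
      have h2 := neg_abs_le (stretchForm (u t))
      have h3 : 0 ≤ A ^ (2 / (2 - α)) := Real.rpow_nonneg ENNReal.toReal_nonneg _
      have h4 := gradSq_nonneg (u t)
      have h5 := mul_nonneg h3 h4
      have h6 := mul_nonneg hK h3
      rw [← hA] at h1
      nlinarith
  obtain ⟨B, hB⟩ := le_of_hasDerivAt_of_lintegral_lt_top (f := fun t => Real.log (gradSq (u t) + 1))
    (f' := fun t => 2 * (-hessSq (u t) - stretchForm (u t)) / (gradSq (u t) + 1)) hT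
    (a := fun t => ENNReal.ofReal (2 * K + 1) * vecBesovInf χ (-α) (curlS (u t)) ^ (2 / (2 - α)))
    (by
      rw [lintegral_const_mul' _ _ ENNReal.ofReal_ne_top]
      exact ENNReal.mul_ne_top ENNReal.ofReal_ne_top hfin)
    (fun t ht => ((hsol.hasDerivAt_gradSq ht).add_const 1).log (hE t).ne') hle
  refine ⟨Real.exp B, fun t ht => ?_⟩
  have := (Real.log_le_iff_le_exp (hE t)).1 (hB t ht)
  linarith

/-- **Blow-up criterion (Corollary 3.1, quantitative contrapositive form)**: if the
`L²` norm of the vorticity of a strong solution of the Navier–Stokes equations blows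
up at time `T`, i.e. `limsup_{t→T⁻} ‖ω(t)‖_{L²} = ∞`, then
`∫₀ᵀ (‖ω(τ)‖_{Ḃ^{-α}_{∞,∞}}^{2/(2-α)} + ‖ω(τ)‖_{Ḃ^{-1-α}_{∞,∞}}^{2/(1-α)}) dτ = ∞`. -/
theorem blowup_criterion_vorticity_besov
    (χ : E3 → ℝ) (hχ : IsLPCutoff χ) (α T : ℝ) (hα : 0 < α) (hα1 : α < 1) (hT : 0 < T)
    (u : ℝ → Fin 3 → 𝓢(E3, ℝ)) (p : ℝ → 𝓢(E3, ℝ)) (hsol : IsStrongSolution T u p)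
    (hblow : Filter.limsup (fun t => vecL2 (curlS (u t))) (nhdsWithin T (Set.Iio T)) = ∞) :
    vortBesovIntegral χ α T u = ∞ := by
  by_contra hne
  obtain ⟨M, hM⟩ := hsol.exists_gradSq_le hχ hα (by linarith) hT (ne_top_of_le_ne_top hne
    (lintegral_mono fun τ => le_self_add))
  have hle : Filter.limsup (fun t => vecL2 (curlS (u t))) (nhdsWithin T (Set.Iio T))
      ≤ (3 * ENNReal.ofReal (4 * M)) ^ (1 / 2 : ℝ) := by
    refine Filter.limsup_le_of_le (h := ?_)
    filter_upwards [Ico_mem_nhdsLT (show T / 2 < T by linarith)] with t ht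
    refine (vecL2_curl_le (u t)).trans ?_
    have := hM t ht
    gcongr
  rw [hblow, top_le_iff] at hle
  exact ENNReal.rpow_ne_top_of_nonneg (by norm_num)
    (ENNReal.mul_ne_top (by norm_num) ENNReal.ofReal_ne_top) hle
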